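/- arXiv:1207.1211 — 2 statements merged into one kernel-verified Lean document; each statement's English description precedes it below -/
import Mathlib

section
/- Every finite subgroup of the special orthogonal group SO(3, ℝ) is isomorphic, as an abstract group, to one of: a cyclic group ℤ/nℤ for some n ≥ 1, a dihedral group of order 2n for some n ≥ 2, the alternating group A₄, the symmetric group S₄, or the alternating group A₅. -/
/-!
A nontrivial rotation fixes exactly two unit vectors, `p` and `-p`. So a nontrivial finite rotation
group `G` acts on its finite set of poles, with every `g ≠ 1` fixing exactly two of them, and with
cyclic stabilizers. If `m i` is the order of the stabilizers in the `i`-th orbit, Burnside's lemma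
gives `∑ i, (1 - 1 / m i) = 2 * (1 - 1 / |G|)`, which only allows the types `(n, n)`, `(2, 2, n)`,
`(2, 3, 3)`, `(2, 3, 4)` and `(2, 3, 5)`. For the first, `G` fixes a pole and is cyclic; for the
second, a stabilizer has index two and every element outside it is an involution. For the last
three, `G` acts faithfully on the cosets of, respectively, the stabilizer of a pole of order 3, the
stabilizer of a pair of opposite poles of order 3, and the normalizer of the centralizer of a
half-turn (a Klein four-group), and the order of `G` identifies the image in `S₄` or `S₅`. The
kernel `K` of such an action is trivial by counting: as `K` is normal, `|K ∩ stabilizer p|` is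
constant on the orbit of `p`, while the nontrivial elements of `K` have only `2 * (|K| - 1)` fixed
points altogether.
-/

namespace FiniteSubgroupSO3

open MulAction Function

section Recognition

variable {G : Type*} [Group G]

/-- The homomorphism out of the dihedral group given by a rotation part `ρ` and an involution `s`
inverting it. -/
def dihedralLift {n : ℕ} (ρ : Multiplicative (ZMod n) →* G) (s : G) (hss : s * s = 1)
    (hs : ∀ i, ρ i * s = s * (ρ i)⁻¹) : DihedralGroup n →* G :=
  MonoidHom.mk'
    (fun
      | .r i => ρ (.ofAdd i)
      | .sr i => s * ρ (.ofAdd i))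
    (by
      have hsub (i j : ZMod n) : ρ (.ofAdd (j - i)) = (ρ (.ofAdd i))⁻¹ * ρ (.ofAdd j) := by
        rw [← map_inv, ← map_mul, ← ofAdd_neg, ← ofAdd_add, neg_add_eq_sub]
      rintro (i | i) (j | j)
      · simp [ofAdd_add]
      · simp only [DihedralGroup.r_mul_sr, hsub, ← mul_assoc, hs]
      · simp [ofAdd_add, mul_assoc]
      · simp only [DihedralGroup.sr_mul_sr, hsub, ← mul_assoc, mul_assoc s _ s, hs, hss, one_mul])

theorem dihedralLift_bijective {n : ℕ} {ρ : Multiplicative (ZMod n) →* G} (hρ : Injective ρ)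
    (hindex : ρ.range.index = 2) {s : G} (hs : s ∉ ρ.range) (hss : s * s = 1)
    (hρs : ∀ i, ρ i * s = s * (ρ i)⁻¹) : Bijective (dihedralLift ρ s hss hρs) := by
  have mem (i) : ρ i ∈ ρ.range := ⟨i, rfl⟩
  have ne (i j) : ρ i ≠ s * ρ j := fun h ↦
    hs ((ρ.range.mul_mem_cancel_right (mem j)).mp (h ▸ mem i))
  constructor
  · rintro (i | i) (j | j) h
    · exact congrArg DihedralGroup.r (Multiplicative.ofAdd.injective (hρ h))
    · exact absurd h (ne _ _)
    · exact absurd h.symm (ne _ _)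
    · exact congrArg DihedralGroup.sr (Multiplicative.ofAdd.injective (hρ (mul_left_cancel h)))
  · intro g
    by_cases hg : g ∈ ρ.range
    · obtain ⟨i, rfl⟩ := hg
      exact ⟨.r i.toAdd, rfl⟩
    · obtain ⟨i, hi⟩ : s * g ∈ ρ.range :=
        (Subgroup.mul_mem_iff_of_index_two hindex).mpr (iff_of_false hs hg)
      refine ⟨.sr i.toAdd, ?_⟩
      change s * ρ i = g
      rw [hi, ← mul_assoc, hss, one_mul]

theorem nonempty_mulEquiv_dihedralGroup {H : Subgroup G} [hH : IsCyclic H] (hindex : H.index = 2)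
    (hinv : ∀ g ∉ H, g * g = 1) : Nonempty (G ≃* DihedralGroup (Nat.card H)) := by
  let ρ : Multiplicative (ZMod (Nat.card H)) →* G :=
    H.subtype.comp (zmodCyclicMulEquiv hH).toMonoidHom
  have hρ : Injective ρ := H.subtype_injective.comp (zmodCyclicMulEquiv hH).injective
  have hrange : ρ.range = H := by
    ext g
    exact ⟨fun ⟨i, hi⟩ ↦ hi ▸ (zmodCyclicMulEquiv hH i).2,
      fun hg ↦ ⟨(zmodCyclicMulEquiv hH).symm ⟨g, hg⟩, by simp [ρ]⟩⟩
  obtain ⟨s, hs⟩ : ∃ s, s ∉ H := by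
    by_contra! h
    simp [(Subgroup.eq_top_iff' H).mpr h] at hindex
  have hconj (i) : ρ i * s = s * (ρ i)⁻¹ := by
    have hi : ρ i * s ∉ H := fun h ↦
      hs ((H.mul_mem_cancel_left (zmodCyclicMulEquiv hH i).2).mp h)
    rw [eq_inv_of_mul_eq_one_left (hinv _ hi), mul_inv_rev,
      inv_eq_of_mul_eq_one_left (hinv s hs)]
  exact ⟨(MulEquiv.ofBijective _ (dihedralLift_bijective hρ (by rwa [hrange])
    (by rwa [hrange]) (hinv s hs) hconj)).symm⟩

theorem exists_injective_hom_perm_of_normalCore_eq_bot {H : Subgroup G} [H.FiniteIndex]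
    (hcore : H.normalCore = ⊥) : ∃ f : G →* Equiv.Perm (Fin H.index), Injective f := by
  let e : G ⧸ H ≃ Fin H.index := Finite.equivFin _
  refine ⟨e.permCongrHom.toMonoidHom.comp (toPermHom G (G ⧸ H)),
    e.permCongrHom.injective.comp ?_⟩
  rw [← MonoidHom.ker_eq_bot_iff, ← Subgroup.normalCore_eq_ker, hcore]

theorem nonempty_mulEquiv_perm_of_normalCore_eq_bot {H : Subgroup G} [H.FiniteIndex]
    (hcore : H.normalCore = ⊥) (hcard : Nat.card G = H.index.factorial) :
    Nonempty (G ≃* Equiv.Perm (Fin H.index)) := by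
  obtain ⟨f, hf⟩ := exists_injective_hom_perm_of_normalCore_eq_bot hcore
  exact ⟨.ofBijective f ((Nat.bijective_iff_injective_and_card f).mpr
    ⟨hf, by rw [hcard, Nat.card_perm, Nat.card_fin]⟩)⟩

theorem nonempty_mulEquiv_alternatingGroup_of_normalCore_eq_bot {H : Subgroup G} [H.FiniteIndex]
    (hcore : H.normalCore = ⊥) (hcard : 2 * Nat.card G = H.index.factorial) :
    Nonempty (G ≃* alternatingGroup (Fin H.index)) := by
  obtain ⟨f, hf⟩ := exists_injective_hom_perm_of_normalCore_eq_bot hcore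
  have hpos : 0 < Nat.card G := by have := H.index.factorial_pos; lia
  have hindex : f.range.index = 2 := by
    refine Nat.eq_of_mul_eq_mul_left hpos ?_
    rw [Nat.card_congr (f.ofInjective hf).toEquiv, f.range.card_mul_index, Nat.card_perm,
      Nat.card_fin, ← hcard, mul_comm, Nat.card_congr (f.ofInjective hf).toEquiv]
  exact ⟨(f.ofInjective hf).trans
    (.subgroupCongr (Equiv.Perm.eq_alternatingGroup_of_index_eq_two hindex))⟩

end Recognition

section Counting

variable {G P : Type*} [Group G] [MulAction G P]

theorem ncard_orbit_mul_card_stabilizer (x : P) :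
    (orbit G x).ncard * Nat.card (stabilizer G x) = Nat.card G := by
  rw [← index_stabilizer, mul_comm, Subgroup.card_mul_index]

theorem card_stabilizer_eq_of_mem_orbit {x y : P} (h : x ∈ orbit G y) :
    Nat.card (stabilizer G x) = Nat.card (stabilizer G y) :=
  Nat.card_congr (stabilizerEquivStabilizerOfOrbitRel (orbitRel_apply.mpr h)).toEquiv

theorem card_inf_stabilizer_smul (K : Subgroup G) [K.Normal] (g : G) (x : P) :
    Nat.card (K ⊓ stabilizer G (g • x) : Subgroup G) =
      Nat.card (K ⊓ stabilizer G x : Subgroup G) := by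
  have hinj : Injective (MulAut.conj g).toMonoidHom := (MulAut.conj g).injective
  have hK : K.map (MulAut.conj g).toMonoidHom = K := Subgroup.Normal.map_conj_eq K g
  rw [stabilizer_smul_eq_stabilizer_map_conj]
  nth_rw 1 [← hK]
  rw [← Subgroup.map_inf_eq _ _ _ hinj]
  exact Nat.card_congr (Subgroup.equivMapOfInjective _ _ hinj).toEquiv.symm

theorem eq_of_card_eq_two {H : Subgroup G} (hH : Nat.card H = 2) {u v : G} (hu : u ∈ H)
    (hu1 : u ≠ 1) (hv : v ∈ H) (hv1 : v ≠ 1) : v = u := by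
  have hunique := (Nat.card_eq_two_iff' (1 : H)).mp hH
  exact congrArg Subtype.val (hunique.unique (y₁ := ⟨v, hv⟩) (y₂ := ⟨u, hu⟩)
    (fun h ↦ hv1 (congrArg Subtype.val h)) (fun h ↦ hu1 (congrArg Subtype.val h)))

theorem index_eq_of_card_eq_card_mul {H : Subgroup G} [Finite H] {n : ℕ}
    (hn : Nat.card G = Nat.card H * n) : H.index = n :=
  Nat.eq_of_mul_eq_mul_left Nat.card_pos (H.card_mul_index.trans hn)

theorem ncard_sdiff_one (K : Subgroup G) : ((K : Set G) \ {1}).ncard = Nat.card K - 1 :=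
  Set.ncard_sdiff_singleton_of_mem K.one_mem

theorem card_normalizer_centralizer_singleton {u : G} (hu : u ≠ 1)
    (hconj : ∀ v ∈ Subgroup.centralizer {u}, v ≠ 1 →
      ∃ n ∈ Subgroup.normalizer (Subgroup.centralizer {u} : Set G), n * u * n⁻¹ = v) :
    Nat.card (Subgroup.normalizer (Subgroup.centralizer {u} : Set G)) =
      (Nat.card (Subgroup.centralizer {u}) - 1) * Nat.card (Subgroup.centralizer {u}) := by
  set Q := Subgroup.centralizer {u}
  set N := Subgroup.normalizer (Q : Set G)
  let _ : MulAction N G := MulAction.compHom G (MulAut.conj.comp N.subtype)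
  have smul_def (n : N) (x : G) : n • x = n * x * (n : G)⁻¹ := rfl
  have horbit : orbit N u = (Q : Set G) \ {1} := by
    ext v
    constructor
    · rintro ⟨n, rfl⟩
      exact ⟨(Subgroup.mem_normalizer_iff.mp n.2 u).mp
        (Subgroup.mem_centralizer_singleton_iff.mpr rfl), fun h ↦ hu (conj_eq_one_iff.mp h)⟩
    · rintro ⟨hv, hv1⟩
      obtain ⟨n, hn, hnv⟩ := hconj v hv hv1
      exact ⟨⟨n, hn⟩, hnv⟩
  have hstabilizer : stabilizer N u = Q.subgroupOf N := by
    ext n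
    rw [mem_stabilizer_iff, smul_def, Subgroup.mem_subgroupOf,
      Subgroup.mem_centralizer_singleton_iff, mul_inv_eq_iff_eq_mul]
  rw [← ncard_orbit_mul_card_stabilizer (G := N) u, horbit, hstabilizer, ncard_sdiff_one,
    Nat.card_congr (Subgroup.subgroupOfEquivOfLe Subgroup.le_normalizer).toEquiv]

-- Double counting of the pairs `(y, k)` with `y` in the orbit of `x` and `1 ≠ k ∈ K` fixing `y`.
theorem card_mul_card_inf_stabilizer_le [Finite G] [Finite P] {n : ℕ}
    (hfix : ∀ g : G, g ≠ 1 → (fixedBy P g).ncard ≤ n) (K : Subgroup G) [K.Normal] (x : P) :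
    Nat.card G * (Nat.card (K ⊓ stabilizer G x : Subgroup G) - 1) ≤
      n * Nat.card (stabilizer G x) * (Nat.card K - 1) := by
  classical
  have := Fintype.ofFinite G
  have := Fintype.ofFinite P
  have hcount : (orbit G x).ncard * (Nat.card (K ⊓ stabilizer G x : Subgroup G) - 1) ≤
      (Nat.card K - 1) * n := by
    rw [← ncard_sdiff_one K, Set.ncard_eq_toFinset_card', Set.ncard_eq_toFinset_card']
    refine Finset.card_mul_le_card_mul (fun y g ↦ g • y = y) (fun y hy ↦ ?_) fun g hg ↦ ?_
    · obtain ⟨a, rfl⟩ := Set.mem_toFinset.mp hy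
      rw [← card_inf_stabilizer_smul K a x, ← ncard_sdiff_one, ← Set.ncard_coe_finset]
      refine Set.ncard_le_ncard fun g ⟨⟨hgK, hgx⟩, hg⟩ ↦ ?_
      simpa using ⟨⟨hgK, hg⟩, hgx⟩
    · refine le_trans ?_ (hfix g (Set.mem_toFinset.mp hg).2)
      rw [← Set.ncard_coe_finset]
      exact Set.ncard_le_ncard fun y hy ↦ (Finset.mem_bipartiteBelow _ |>.mp hy).2
  calc Nat.card G * (Nat.card (K ⊓ stabilizer G x : Subgroup G) - 1)
      = Nat.card (stabilizer G x) *
          ((orbit G x).ncard * (Nat.card (K ⊓ stabilizer G x : Subgroup G) - 1)) := by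
        rw [← ncard_orbit_mul_card_stabilizer x]; ring
    _ ≤ Nat.card (stabilizer G x) * ((Nat.card K - 1) * n) := Nat.mul_le_mul_left _ hcount
    _ = n * Nat.card (stabilizer G x) * (Nat.card K - 1) := by ring

/-- The orbits of an action can be indexed by `ι` in such a way that the stabilizers of the points
of the `i`-th orbit have order `m i`. The family `m` is what is classically called the type of the
action. -/
def HasStabilizerOrders {ι : Type*} (G P : Type*) [Group G] [MulAction G P] (m : ι → ℕ) : Prop :=
  ∃ p : ι → P, Bijective (fun i ↦ (Quotient.mk'' (p i) : orbitRel.Quotient G P)) ∧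
    ∀ i, Nat.card (stabilizer G (p i)) = m i

theorem exists_monotone_hasStabilizerOrders (G P : Type*) [Group G] [MulAction G P]
    [Finite (orbitRel.Quotient G P)] :
    ∃ (k : ℕ) (m : Fin k → ℕ), Monotone m ∧ HasStabilizerOrders G P m := by
  let e := (Finite.equivFin (orbitRel.Quotient G P)).symm
  let m := fun i ↦ Nat.card (stabilizer G (e i).out)
  refine ⟨_, m ∘ Tuple.sort m, Tuple.monotone_sort m, fun i ↦ (e (Tuple.sort m i)).out, ?_,
    fun _ ↦ rfl⟩
  convert e.bijective.comp (Tuple.sort m).bijective using 2 with i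
  exact Quotient.out_eq' _

namespace HasStabilizerOrders

variable {ι : Type*} {m : ι → ℕ}

theorem exists_card_stabilizer_eq_and_mem_orbit (h : HasStabilizerOrders G P m) :
    ∃ p : ι → P, (∀ i, Nat.card (stabilizer G (p i)) = m i) ∧
      ∀ x, ∃ i, Nat.card (stabilizer G x) = m i ∧ x ∈ orbit G (p i) := by
  obtain ⟨p, hp, hm⟩ := h
  refine ⟨p, hm, fun x ↦ ?_⟩
  obtain ⟨i, hi⟩ := hp.surjective (Quotient.mk'' x)
  have hx : x ∈ orbit G (p i) := orbitRel_apply.mp (Quotient.eq''.mp hi.symm)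
  exact ⟨i, (card_stabilizer_eq_of_mem_orbit hx).trans (hm i), hx⟩

theorem exists_card_stabilizer_eq (h : HasStabilizerOrders G P m) (i : ι) :
    ∃ x : P, Nat.card (stabilizer G x) = m i :=
  let ⟨p, _, hm⟩ := h
  ⟨p i, hm i⟩

theorem forall_card_stabilizer (h : HasStabilizerOrders G P m) {C : ℕ → Prop}
    (hC : ∀ i, C (m i)) (x : P) : C (Nat.card (stabilizer G x)) := by
  obtain ⟨p, -, hp⟩ := h.exists_card_stabilizer_eq_and_mem_orbit
  obtain ⟨i, hi, -⟩ := hp x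
  exact hi ▸ hC i

theorem mem_orbit (h : HasStabilizerOrders G P m) {i : ι} (hi : ∀ j, m j = m i → j = i) {x y : P}
    (hx : Nat.card (stabilizer G x) = m i) (hy : Nat.card (stabilizer G y) = m i) :
    x ∈ orbit G y := by
  obtain ⟨p, -, hp⟩ := h.exists_card_stabilizer_eq_and_mem_orbit
  obtain ⟨j, hj, hxj⟩ := hp x
  obtain ⟨k, hk, hyk⟩ := hp y
  rw [hi j (hj.symm.trans hx)] at hxj
  rw [hi k (hk.symm.trans hy)] at hyk
  rwa [orbit_eq_iff.mpr hyk]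

theorem card_eq_sum [Finite G] [Finite P] [Fintype ι] (h : HasStabilizerOrders G P m) :
    (Nat.card P : ℚ) = ∑ i, (Nat.card G : ℚ) / m i := by
  obtain ⟨p, hp, hm⟩ := h
  have := Fintype.ofFinite (orbitRel.Quotient G P)
  rw [Nat.card_congr (selfEquivSigmaOrbits' G P), Nat.card_sigma,
    ← (Equiv.ofBijective _ hp).sum_comp, Nat.cast_sum]
  refine Finset.sum_congr rfl fun i _ ↦ ?_
  have hpos : (m i : ℚ) ≠ 0 := by
    rw [← hm i]
    exact_mod_cast Nat.card_pos.ne'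
  rw [eq_div_iff hpos, Equiv.ofBijective_apply, orbitRel.Quotient.orbit_mk, ← hm i]
  exact_mod_cast ncard_orbit_mul_card_stabilizer (p i)

theorem sum_one_sub_inv [Finite G] [Finite P] [Fintype ι] (h : HasStabilizerOrders G P m)
    {n : ℕ} (hfix : ∀ g : G, g ≠ 1 → (fixedBy P g).ncard = n) :
    ∑ i, (1 - (m i : ℚ)⁻¹) = n * (1 - (Nat.card G : ℚ)⁻¹) := by
  classical
  have := Fintype.ofFinite G
  have := Fintype.ofFinite P
  have hburnside : (Nat.card P : ℚ) + (Nat.card G - 1) * n = Fintype.card ι * Nat.card G := by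
    have hsum := sum_card_fixedBy_eq_card_orbits_mul_card_group G P
    obtain ⟨p, hp, -⟩ := h
    simp only [← Nat.card_eq_fintype_card (α := fixedBy P _), Nat.card_coe_set_eq] at hsum
    rw [← Finset.add_sum_erase _ _ (Finset.mem_univ (1 : G)),
      Finset.sum_congr rfl fun g hg ↦ hfix g (Finset.ne_of_mem_erase hg), fixedBy_one_eq_univ,
      Set.ncard_univ, Finset.sum_const, Finset.card_erase_of_mem (Finset.mem_univ 1),
      Finset.card_univ, ← Nat.card_eq_fintype_card (α := G), smul_eq_mul,
      ← Fintype.card_congr (Equiv.ofBijective _ hp)] at hsum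
    have hcast := congrArg (Nat.cast (R := ℚ)) hsum
    rwa [Nat.cast_add, Nat.cast_mul, Nat.cast_mul, Nat.cast_pred Nat.card_pos] at hcast
  have hG : (Nat.card G : ℚ) ≠ 0 := by exact_mod_cast Nat.card_pos.ne'
  rw [h.card_eq_sum] at hburnside
  simp only [div_eq_mul_inv, ← Finset.mul_sum] at hburnside
  rw [Finset.sum_sub_distrib, Finset.sum_const, Finset.card_univ, nsmul_one]
  refine mul_left_cancel₀ hG ?_
  linear_combination n * mul_inv_cancel₀ hG - hburnside

end HasStabilizerOrders

end Counting

section Arithmetic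

theorem card_eq_two_or_three_of_sum_one_sub_inv {ι : Type*} [Fintype ι] {m : ι → ℕ} {N : ℕ}
    (hN : 2 ≤ N) (hm : ∀ i, 2 ≤ m i) (hmN : ∀ i, m i ≤ N)
    (h : ∑ i, (1 - (m i : ℚ)⁻¹) = 2 * (1 - (N : ℚ)⁻¹)) :
    Fintype.card ι = 2 ∨ Fintype.card ι = 3 := by
  have hN' : (N : ℚ)⁻¹ ≤ 2⁻¹ := inv_anti₀ two_pos (by exact_mod_cast hN)
  have hN₀ : 0 < (N : ℚ)⁻¹ := by positivity
  have hlower : Fintype.card ι • (2⁻¹ : ℚ) ≤ ∑ i, (1 - (m i : ℚ)⁻¹) := by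
    refine Finset.card_nsmul_le_sum _ _ _ fun i _ ↦ ?_
    have : (m i : ℚ)⁻¹ ≤ 2⁻¹ := inv_anti₀ two_pos (by exact_mod_cast hm i)
    linarith
  have hupper : ∑ i, (1 - (m i : ℚ)⁻¹) ≤ Fintype.card ι • (1 - (N : ℚ)⁻¹) := by
    refine Finset.sum_le_card_nsmul _ _ _ fun i _ ↦ sub_le_sub_left (inv_anti₀ ?_ ?_) _
    · exact_mod_cast two_pos.trans_le (hm i)
    · exact_mod_cast hmN i
  rw [h, nsmul_eq_mul] at hlower hupper
  have hlt : (Fintype.card ι : ℚ) < 4 := by linarith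
  have hge : (2 : ℚ) ≤ Fintype.card ι := le_of_mul_le_mul_right hupper (by linarith)
  norm_cast at hlt hge
  lia

theorem eq_and_eq_of_inv_add_inv {a b N : ℕ} (ha : 0 < a) (hb : 0 < b) (haN : a ≤ N) (hbN : b ≤ N)
    (h : (a : ℚ)⁻¹ + (b : ℚ)⁻¹ = 2 * (N : ℚ)⁻¹) : a = N ∧ b = N := by
  have ha' : (N : ℚ)⁻¹ ≤ (a : ℚ)⁻¹ := inv_anti₀ (by exact_mod_cast ha) (by exact_mod_cast haN)
  have hb' : (N : ℚ)⁻¹ ≤ (b : ℚ)⁻¹ := inv_anti₀ (by exact_mod_cast hb) (by exact_mod_cast hbN)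
  constructor
  · exact_mod_cast inv_injective (show (a : ℚ)⁻¹ = (N : ℚ)⁻¹ by linarith)
  · exact_mod_cast inv_injective (show (b : ℚ)⁻¹ = (N : ℚ)⁻¹ by linarith)

theorem eq_two_and_le_three_of_one_lt_inv_add_inv_add_inv {a b c : ℕ} (ha : 2 ≤ a) (hab : a ≤ b)
    (hbc : b ≤ c) (h : 1 < (a : ℚ)⁻¹ + (b : ℚ)⁻¹ + (c : ℚ)⁻¹) :
    a = 2 ∧ (b = 2 ∨ b = 3 ∧ c < 6) := by
  have inv_le {x y : ℕ} (hx : 0 < x) (hxy : x ≤ y) : (y : ℚ)⁻¹ ≤ (x : ℚ)⁻¹ :=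
    inv_anti₀ (by exact_mod_cast hx) (by exact_mod_cast hxy)
  have hb' := inv_le (by lia) hab
  have hc' := inv_le (by lia) hbc
  have ha2 : a = 2 := by
    by_contra hne
    have := inv_le three_pos (show 3 ≤ a by lia)
    norm_num at this
    linarith
  subst ha2
  refine ⟨rfl, ?_⟩
  have hb3 : b < 4 := by
    by_contra! hb
    have := inv_le four_pos hb
    norm_num at this h
    linarith
  obtain rfl | rfl : b = 2 ∨ b = 3 := by lia
  · exact .inl rfl
  · refine .inr ⟨rfl, ?_⟩
    by_contra! hc
    have := inv_le (by norm_num) hc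
    norm_num at this h
    linarith

theorem platonic_of_inv_add_inv_add_inv {a b c N : ℕ} (ha : 2 ≤ a) (hab : a ≤ b) (hbc : b ≤ c)
    (hN : 0 < N) (h : (a : ℚ)⁻¹ + (b : ℚ)⁻¹ + (c : ℚ)⁻¹ = 1 + 2 * (N : ℚ)⁻¹) :
    (a = 2 ∧ b = 2 ∧ N = 2 * c) ∨ (a = 2 ∧ b = 3 ∧ c = 3 ∧ N = 12) ∨
      (a = 2 ∧ b = 3 ∧ c = 4 ∧ N = 24) ∨ (a = 2 ∧ b = 3 ∧ c = 5 ∧ N = 60) := by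
  have hN' : 0 < (N : ℚ)⁻¹ := by positivity
  obtain ⟨rfl, rfl | ⟨rfl, hc⟩⟩ :=
    eq_two_and_le_three_of_one_lt_inv_add_inv_add_inv ha hab hbc (by linarith)
  · refine .inl ⟨rfl, rfl, ?_⟩
    have hinv : (N : ℚ) = 2 * c := by
      rw [← inv_inj, mul_inv]
      norm_num at h
      linarith
    exact_mod_cast hinv
  · have hcast (M : ℕ) (hM : (N : ℚ)⁻¹ = (M : ℚ)⁻¹) : N = M := by exact_mod_cast inv_injective hM
    obtain rfl | rfl | rfl : c = 3 ∨ c = 4 ∨ c = 5 := by lia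
    all_goals norm_num at h
    · exact .inr (.inl ⟨rfl, rfl, rfl, hcast 12 (by norm_num; linarith)⟩)
    · exact .inr (.inr (.inl ⟨rfl, rfl, rfl, hcast 24 (by norm_num; linarith)⟩))
    · exact .inr (.inr (.inr ⟨rfl, rfl, rfl, hcast 60 (by norm_num; linarith)⟩))

end Arithmetic

open scoped Pointwise

/-- The properties of the action of a group of rotations `G` of three-space on the set `P` of its
poles, i.e. of the unit vectors fixed by some nontrivial element of `G`; the antipode of `p` is
`-p`. -/
structure IsPoleAction (G P : Type*) [Group G] [MulAction G P] [InvolutiveNeg P] : Prop where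
  smul_neg (g : G) (p : P) : g • -p = -(g • p)
  neg_ne (p : P) : -p ≠ p
  exists_fixedBy_eq (g : G) : g ≠ 1 → ∃ p : P, fixedBy P g = {p, -p}
  stabilizer_ne_bot (p : P) : stabilizer G p ≠ ⊥
  isCyclic_stabilizer (p : P) : IsCyclic (stabilizer G p)

namespace IsPoleAction

variable {G P : Type*} [Group G] [MulAction G P] [InvolutiveNeg P] (h : IsPoleAction G P)

include h

theorem eq_or_eq_neg {g : G} (hg : g ≠ 1) {p q : P} (hp : g • p = p) (hq : g • q = q) :
    q = p ∨ q = -p := by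
  obtain ⟨x, hx⟩ := h.exists_fixedBy_eq g hg
  have mem {y : P} (hy : g • y = y) : y = x ∨ y = -x := by
    simpa [hx] using (show y ∈ fixedBy P g from hy)
  obtain rfl | rfl := mem hp <;> obtain rfl | rfl := mem hq <;> simp

theorem ncard_fixedBy (g : G) (hg : g ≠ 1) : (fixedBy P g).ncard = 2 := by
  obtain ⟨p, hp⟩ := h.exists_fixedBy_eq g hg
  rw [hp, Set.ncard_pair (h.neg_ne p).symm]

theorem exists_smul_eq_self (g : G) (hg : g ≠ 1) : ∃ p : P, g • p = p := by
  obtain ⟨p, hp⟩ := h.exists_fixedBy_eq g hg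
  exact ⟨p, (hp ▸ Set.mem_insert p _ : p ∈ fixedBy P g)⟩

theorem exists_ne_one_smul_eq_self (p : P) : ∃ g : G, g ≠ 1 ∧ g • p = p :=
  let ⟨g, hg, hg1⟩ := (stabilizer G p).bot_or_exists_ne_one.resolve_left (h.stabilizer_ne_bot p)
  ⟨g, hg1, hg⟩

protected theorem finite [Finite G] : Finite P := by
  have hunion : (⋃ g ∈ ({1}ᶜ : Set G), fixedBy P g) = Set.univ := by
    refine Set.eq_univ_of_forall fun p ↦ ?_
    obtain ⟨g, hg, hp⟩ := h.exists_ne_one_smul_eq_self p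
    exact Set.mem_biUnion hg hp
  refine Set.finite_univ_iff.mp (hunion ▸ (Set.toFinite _).biUnion fun g hg ↦ ?_)
  exact Set.finite_of_ncard_ne_zero (by simp [h.ncard_fixedBy g hg])

theorem stabilizer_neg (p : P) : stabilizer G (-p) = stabilizer G p := by
  ext g
  simp only [mem_stabilizer_iff, h.smul_neg, neg_inj]

theorem mul_self_eq_one {g : G} {p : P} (hg : g • p = -p) : g * g = 1 := by
  by_contra hgg
  have hg1 : g ≠ 1 := fun h1 ↦ hgg (by rw [h1, one_mul])
  obtain ⟨q, hq⟩ := h.exists_smul_eq_self g hg1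
  have hqp : q = p ∨ q = -p := h.eq_or_eq_neg hgg
    (by rw [mul_smul, hg, h.smul_neg, hg, neg_neg]) (by rw [mul_smul, hq, hq])
  have hgp : g • p = p := by
    obtain rfl | rfl := hqp
    · exact hq
    · rwa [h.smul_neg, neg_inj] at hq
  exact h.neg_ne p (hg.symm.trans hgp)

theorem mem_stabilizer_pair {g : G} {p : P} :
    g ∈ stabilizer G ({p, -p} : Set P) ↔ g • p = p ∨ g • p = -p := by
  rw [mem_stabilizer_iff, Set.smul_set_insert, Set.smul_set_singleton, h.smul_neg,
    Set.pair_eq_pair_iff, neg_inj, neg_eq_iff_eq_neg, and_self, and_self]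

theorem stabilizer_le_stabilizer_pair (p : P) :
    stabilizer G p ≤ stabilizer G ({p, -p} : Set P) :=
  fun _ hg ↦ h.mem_stabilizer_pair.mpr (.inl hg)

theorem card_stabilizer_pair {p : P} (hp : -p ∈ orbit G p) :
    Nat.card (stabilizer G ({p, -p} : Set P)) = 2 * Nat.card (stabilizer G p) := by
  obtain ⟨g, hg⟩ := hp
  have hrel : (stabilizer G p).relIndex (stabilizer G ({p, -p} : Set P)) = 2 := by
    refine Subgroup.relIndex_eq_two_iff_exists_notMem_and.mpr
      ⟨g, h.mem_stabilizer_pair.mpr (.inr hg), fun hgp ↦ h.neg_ne p (hg.symm.trans hgp),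
        fun k hk ↦ ?_⟩
    refine (h.mem_stabilizer_pair.mp hk).symm.imp (fun hkp ↦ ?_) id
    rw [mem_stabilizer_iff, mul_smul]
    rw [show g • p = -p from hg, h.smul_neg, hkp, neg_neg]
  rw [← hrel, ← Subgroup.relIndex_bot_left, ← Subgroup.relIndex_bot_left, mul_comm,
    Subgroup.relIndex_mul_relIndex _ _ _ bot_le (h.stabilizer_le_stabilizer_pair p)]

theorem neg_mem_orbit {ι : Type*} {m : ι → ℕ} (hm : HasStabilizerOrders G P m) {i : ι}
    (hi : ∀ j, m j = m i → j = i) {p : P} (hp : Nat.card (stabilizer G p) = m i) :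
    -p ∈ orbit G p :=
  hm.mem_orbit hi (by rw [h.stabilizer_neg, hp]) hp

theorem stabilizer_pair_eq_centralizer {p : P} (hp : Nat.card (stabilizer G p) = 2) {u : G}
    (hu : u • p = p) (hu1 : u ≠ 1) :
    stabilizer G ({p, -p} : Set P) = Subgroup.centralizer {u} := by
  ext g
  rw [h.mem_stabilizer_pair, Subgroup.mem_centralizer_singleton_iff]
  constructor
  · intro hg
    have hfix : (g * u * g⁻¹) • (g • p) = g • p := by
      rw [mul_smul, inv_smul_smul, mul_smul, hu]
    have hfix' : (g * u * g⁻¹) • p = p := by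
      obtain hg | hg := hg <;> rw [hg] at hfix
      · exact hfix
      · rwa [h.smul_neg, neg_inj] at hfix
    exact mul_inv_eq_iff_eq_mul.mp (eq_of_card_eq_two hp hu hu1 hfix'
      (conj_eq_one_iff.not.mpr hu1))
  · intro hg
    exact h.eq_or_eq_neg hu1 hu (by rw [← mul_smul, ← hg, mul_smul, hu])

section Finite

variable [Finite G]

theorem two_le_card_stabilizer (p : P) : 2 ≤ Nat.card (stabilizer G p) :=
  (stabilizer G p).one_lt_card_iff_ne_bot.mpr (h.stabilizer_ne_bot p)

theorem hasStabilizerOrders [Nontrivial G] :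
    HasStabilizerOrders G P ![Nat.card G, Nat.card G] ∨
    (∃ n, Nat.card G = 2 * n ∧ HasStabilizerOrders G P ![2, 2, n]) ∨
    (Nat.card G = 12 ∧ HasStabilizerOrders G P ![2, 3, 3]) ∨
    (Nat.card G = 24 ∧ HasStabilizerOrders G P ![2, 3, 4]) ∨
    (Nat.card G = 60 ∧ HasStabilizerOrders G P ![2, 3, 5]) := by
  have := h.finite
  obtain ⟨k, m, hmono, hm⟩ := exists_monotone_hasStabilizerOrders G P
  have hsum := hm.sum_one_sub_inv h.ncard_fixedBy
  have two_le (i) : 2 ≤ m i := by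
    obtain ⟨x, hx⟩ := hm.exists_card_stabilizer_eq i
    exact hx ▸ h.two_le_card_stabilizer x
  have le_card (i) : m i ≤ Nat.card G := by
    obtain ⟨x, hx⟩ := hm.exists_card_stabilizer_eq i
    exact hx ▸ (stabilizer G x).card_le_card_group
  have hk := card_eq_two_or_three_of_sum_one_sub_inv Finite.one_lt_card two_le le_card hsum
  rw [Fintype.card_fin] at hk
  obtain rfl | rfl := hk
  · have hm_eq : m = ![m 0, m 1] := by ext i; fin_cases i <;> rfl
    rw [Fin.sum_univ_two] at hsum
    obtain ⟨h0, h1⟩ := eq_and_eq_of_inv_add_inv (two_pos.trans_le (two_le 0))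
      (two_pos.trans_le (two_le 1)) (le_card 0) (le_card 1)
      (by push_cast at hsum; linear_combination -hsum)
    rw [hm_eq, h0, h1] at hm
    exact .inl hm
  · have hm_eq : m = ![m 0, m 1, m 2] := by ext i; fin_cases i <;> rfl
    rw [Fin.sum_univ_three] at hsum
    rw [hm_eq] at hm
    obtain ⟨h0, h1, hG⟩ | ⟨h0, h1, h2, hG⟩ | ⟨h0, h1, h2, hG⟩ | ⟨h0, h1, h2, hG⟩ :=
      platonic_of_inv_add_inv_add_inv (two_le 0) (hmono (by decide : (0 : Fin 3) ≤ 1))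
        (hmono (by decide : (1 : Fin 3) ≤ 2)) Nat.card_pos
        (by push_cast at hsum; linear_combination -hsum)
    · exact .inr (.inl ⟨m 2, hG, by rwa [h0, h1] at hm⟩)
    · exact .inr (.inr (.inl ⟨hG, by rwa [h0, h1, h2] at hm⟩))
    · exact .inr (.inr (.inr (.inl ⟨hG, by rwa [h0, h1, h2] at hm⟩)))
    · exact .inr (.inr (.inr (.inr ⟨hG, by rwa [h0, h1, h2] at hm⟩)))

theorem nonempty_mulEquiv_dihedralGroup {p : P}
    (hcard : Nat.card G = 2 * Nat.card (stabilizer G p)) :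
    Nonempty (G ≃* DihedralGroup (Nat.card (stabilizer G p))) := by
  have := h.isCyclic_stabilizer p
  have hindex : (stabilizer G p).index = 2 :=
    index_eq_of_card_eq_card_mul (by rw [hcard, mul_comm])
  have := Subgroup.normal_of_index_eq_two hindex
  refine FiniteSubgroupSO3.nonempty_mulEquiv_dihedralGroup hindex fun g hg ↦ ?_
  obtain ⟨k, hk, hkp⟩ := h.exists_ne_one_smul_eq_self p
  have hkg : k • g • p = g • p := by
    have hconj := this.conj_mem' k hkp g
    rwa [mem_stabilizer_iff, mul_smul, mul_smul, inv_smul_eq_iff] at hconj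
  exact h.mul_self_eq_one ((h.eq_or_eq_neg hk hkp hkg).resolve_left hg)

theorem card_mul_card_inf_stabilizer_le (K : Subgroup G) [K.Normal] (p : P) :
    Nat.card G * (Nat.card (K ⊓ stabilizer G p : Subgroup G) - 1) ≤
      2 * Nat.card (stabilizer G p) * (Nat.card K - 1) :=
  have := h.finite
  FiniteSubgroupSO3.card_mul_card_inf_stabilizer_le (fun g hg ↦ (h.ncard_fixedBy g hg).le) K p

theorem exists_two_le_card_inf_stabilizer {K : Subgroup G} (hK : K ≠ ⊥) :
    ∃ p : P, 2 ≤ Nat.card (K ⊓ stabilizer G p : Subgroup G) := by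
  obtain ⟨g, hgK, hg⟩ := K.bot_or_exists_ne_one.resolve_left hK
  obtain ⟨p, hp⟩ := h.exists_smul_eq_self g hg
  refine ⟨p, (Subgroup.one_lt_card_iff_ne_bot _).mpr fun hbot ↦ hg ?_⟩
  exact Subgroup.mem_bot.mp (hbot ▸ Subgroup.mem_inf.mpr ⟨hgK, hp⟩)

theorem normalCore_eq_bot_of_prime_card_stabilizer
    (hprime : ∀ p : P, (Nat.card (stabilizer G p)).Prime) {H : Subgroup G} (hH : 4 ≤ H.index) :
    H.normalCore = ⊥ := by
  by_contra hK
  obtain ⟨p, hp⟩ := h.exists_two_le_card_inf_stabilizer hK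
  have hinf : Nat.card (H.normalCore ⊓ stabilizer G p : Subgroup G) =
      Nat.card (stabilizer G p) :=
    ((Nat.dvd_prime (hprime p)).mp (Subgroup.card_dvd_of_le inf_le_right)).resolve_left (by lia)
  have hle := h.card_mul_card_inf_stabilizer_le H.normalCore p
  have hcore : Nat.card H.normalCore ≤ Nat.card H := Subgroup.card_le_of_le H.normalCore_le
  have hpos : 0 < Nat.card H.normalCore := Nat.card_pos
  have hcard := H.card_mul_index
  obtain ⟨l, hl⟩ := Nat.exists_eq_add_of_le hp
  obtain ⟨c, hc⟩ := Nat.exists_eq_add_of_le (Nat.card_pos : 0 < Nat.card H.normalCore)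
  rw [← hinf, hl, hc] at hle
  have : 4 * (1 + c) ≤ Nat.card G := by nlinarith
  rw [show 2 + l - 1 = l + 1 by lia, Nat.add_sub_cancel_left] at hle
  nlinarith

theorem nonempty_mulEquiv_alternatingGroup_four (hG : Nat.card G = 12)
    (hm : HasStabilizerOrders G P ![2, 3, 3]) : Nonempty (G ≃* alternatingGroup (Fin 4)) := by
  obtain ⟨p, hp⟩ := hm.exists_card_stabilizer_eq 1
  have hindex : (stabilizer G p).index = 4 := by
    refine index_eq_of_card_eq_card_mul ?_
    rw [hG, hp]
    rfl
  have hcore : (stabilizer G p).normalCore = ⊥ :=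
    h.normalCore_eq_bot_of_prime_card_stabilizer (hm.forall_card_stabilizer (by decide)) hindex.ge
  exact hindex ▸ nonempty_mulEquiv_alternatingGroup_of_normalCore_eq_bot hcore
    (by rw [hG, hindex]; rfl)

theorem normalCore_stabilizer_pair_eq_bot {p : P} (hG : Nat.card G = 24)
    (hm : HasStabilizerOrders G P ![2, 3, 4]) (hp : Nat.card (stabilizer G p) = 3)
    (hpair : Nat.card (stabilizer G ({p, -p} : Set P)) = 6) :
    (stabilizer G ({p, -p} : Set P)).normalCore = ⊥ := by
  set K := (stabilizer G ({p, -p} : Set P)).normalCore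
  have hKle : K ≤ stabilizer G ({p, -p} : Set P) := Subgroup.normalCore_le _
  have hdvd : Nat.card K ∣ 6 := hpair ▸ Subgroup.card_dvd_of_le hKle
  have hK6 : Nat.card K ≠ 6 := fun hK ↦ by
    have hle := h.card_mul_card_inf_stabilizer_le K p
    have hpK : stabilizer G p ≤ K := by
      rw [Subgroup.eq_of_le_of_card_ge hKle (by rw [hpair, hK])]
      exact h.stabilizer_le_stabilizer_pair p
    rw [inf_eq_right.mpr hpK, hG, hK, hp] at hle
    lia
  have hK3 : Nat.card K ≤ 3 := by
    have hle := Nat.le_of_dvd (by norm_num) hdvd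
    interval_cases Nat.card K <;> lia
  by_contra hbot
  obtain ⟨q, hq⟩ := h.exists_two_le_card_inf_stabilizer hbot
  have hq4 : Nat.card (stabilizer G q) ≤ 4 :=
    hm.forall_card_stabilizer (C := (· ≤ 4)) (by decide) q
  have hle := h.card_mul_card_inf_stabilizer_le K q
  rw [hG] at hle
  have : 2 * Nat.card (stabilizer G q) * (Nat.card K - 1) ≤ 2 * 4 * 2 := by
    gcongr
    lia
  lia

theorem nonempty_mulEquiv_perm_four (hG : Nat.card G = 24)
    (hm : HasStabilizerOrders G P ![2, 3, 4]) : Nonempty (G ≃* Equiv.Perm (Fin 4)) := by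
  obtain ⟨p, hp⟩ := hm.exists_card_stabilizer_eq 1
  have hpair : Nat.card (stabilizer G ({p, -p} : Set P)) = 6 := by
    rw [h.card_stabilizer_pair (h.neg_mem_orbit hm (by decide) hp), hp]
    rfl
  have hindex : (stabilizer G ({p, -p} : Set P)).index = 4 :=
    index_eq_of_card_eq_card_mul (by rw [hG, hpair])
  have hcore := h.normalCore_stabilizer_pair_eq_bot hG hm hp hpair
  exact hindex ▸ nonempty_mulEquiv_perm_of_normalCore_eq_bot hcore (by rw [hG, hindex]; rfl)

theorem exists_normalizer_conj_eq (hG : Nat.card G = 60)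
    (hm : HasStabilizerOrders G P ![2, 3, 5]) {p : P} (hp : Nat.card (stabilizer G p) = 2) {u : G}
    (hu : u • p = p) (hu1 : u ≠ 1) (hcard : Nat.card (Subgroup.centralizer {u}) = 4) {v : G}
    (hv : v ∈ Subgroup.centralizer {u}) (hv1 : v ≠ 1) :
    ∃ n ∈ Subgroup.normalizer (Subgroup.centralizer {u} : Set G), n * u * n⁻¹ = v := by
  set Q := Subgroup.centralizer {u}
  have hprime := hm.forall_card_stabilizer (C := Nat.Prime) (by decide)
  obtain ⟨x, hx⟩ := h.exists_smul_eq_self v hv1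
  have hx2 : Nat.card (stabilizer G x) = 2 := by
    have horder : orderOf v = Nat.card (stabilizer G x) :=
      ((Nat.dvd_prime (hprime x)).mp
        ((stabilizer G x).orderOf_dvd_natCard hx)).resolve_left (by rwa [orderOf_eq_one_iff])
    have hdvd : Nat.card (stabilizer G x) ∣ 2 ^ 2 := by
      rw [← horder, show 2 ^ 2 = Nat.card Q from hcard.symm]
      exact Q.orderOf_dvd_natCard hv
    exact (Nat.prime_dvd_prime_iff_eq (hprime x) Nat.prime_two).mp
      ((hprime x).dvd_of_dvd_pow hdvd)
  obtain ⟨g, hg⟩ : p ∈ orbit G x := hm.mem_orbit (i := 0) (by decide) hp hx2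
  have hgv : g⁻¹ * u * g = v := by
    have hfix : (g * v * g⁻¹) • p = p := by
      rw [← show g • x = p from hg, mul_smul, inv_smul_smul, mul_smul, hx]
    rw [← eq_of_card_eq_two hp hu hu1 hfix (conj_eq_one_iff.not.mpr hv1)]
    group
  have : Fact (Nat.Prime 2) := ⟨Nat.prime_two⟩
  have hindex : Q.index = 15 := index_eq_of_card_eq_card_mul (by rw [hG, hcard])
  let S : Sylow 2 G := (IsPGroup.of_card (n := 2) hcard).toSylow (by rw [hindex]; decide)
  have : IsMulCommutative S := IsPGroup.isMulCommutative_of_card_eq_prime_sq (p := 2) hcard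
  obtain ⟨n, hn, hnu⟩ := S.conj_eq_normalizer_conj_of_mem u g
    (Subgroup.mem_centralizer_singleton_iff.mpr rfl) (by rwa [hgv])
  exact ⟨n⁻¹, inv_mem hn, by rw [inv_inv, ← hnu, hgv]⟩

theorem nonempty_mulEquiv_alternatingGroup_five (hG : Nat.card G = 60)
    (hm : HasStabilizerOrders G P ![2, 3, 5]) : Nonempty (G ≃* alternatingGroup (Fin 5)) := by
  obtain ⟨p, hp⟩ := hm.exists_card_stabilizer_eq 0
  obtain ⟨u, hu1, hu⟩ := h.exists_ne_one_smul_eq_self p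
  have hcard : Nat.card (Subgroup.centralizer {u}) = 4 := by
    rw [← h.stabilizer_pair_eq_centralizer hp hu hu1,
      h.card_stabilizer_pair (h.neg_mem_orbit hm (by decide) hp), hp]
    rfl
  have hnormalizer := card_normalizer_centralizer_singleton hu1 fun _ ↦
    h.exists_normalizer_conj_eq hG hm hp hu hu1 hcard
  set N := Subgroup.normalizer (Subgroup.centralizer {u} : Set G)
  have hindex : N.index = 5 := index_eq_of_card_eq_card_mul (by rw [hG, hnormalizer, hcard])
  have hcore : N.normalCore = ⊥ := h.normalCore_eq_bot_of_prime_card_stabilizer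
    (hm.forall_card_stabilizer (by decide)) (by rw [hindex]; norm_num)
  exact hindex ▸ nonempty_mulEquiv_alternatingGroup_of_normalCore_eq_bot hcore
    (by rw [hG, hindex]; rfl)

theorem classification :
    (∃ n : ℕ, 1 ≤ n ∧ Nonempty (G ≃* Multiplicative (ZMod n))) ∨
    (∃ n : ℕ, 2 ≤ n ∧ Nonempty (G ≃* DihedralGroup n)) ∨
    Nonempty (G ≃* alternatingGroup (Fin 4)) ∨
    Nonempty (G ≃* Equiv.Perm (Fin 4)) ∨
    Nonempty (G ≃* alternatingGroup (Fin 5)) := by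
  have cyclic (hG : IsCyclic G) : ∃ n : ℕ, 1 ≤ n ∧ Nonempty (G ≃* Multiplicative (ZMod n)) :=
    ⟨Nat.card G, Nat.card_pos, ⟨(zmodCyclicMulEquiv hG).symm⟩⟩
  obtain _ | _ := subsingleton_or_nontrivial G
  · exact .inl (cyclic inferInstance)
  obtain hm | ⟨n, hG, hm⟩ | ⟨hG, hm⟩ | ⟨hG, hm⟩ | ⟨hG, hm⟩ := h.hasStabilizerOrders
  · obtain ⟨p, hp⟩ := hm.exists_card_stabilizer_eq 0
    have htop : stabilizer G p = ⊤ := Subgroup.eq_top_of_card_eq _ hp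
    have : IsCyclic (⊤ : Subgroup G) := htop ▸ h.isCyclic_stabilizer p
    exact .inl (cyclic (isCyclic_of_surjective _ Subgroup.topEquiv.surjective))
  · obtain ⟨p, hp⟩ := hm.exists_card_stabilizer_eq 2
    exact .inr (.inl ⟨_, h.two_le_card_stabilizer p,
      h.nonempty_mulEquiv_dihedralGroup (by rw [hG, hp]; rfl)⟩)
  · exact .inr (.inr (.inl (h.nonempty_mulEquiv_alternatingGroup_four hG hm)))
  · exact .inr (.inr (.inr (.inl (h.nonempty_mulEquiv_perm_four hG hm))))
  · exact .inr (.inr (.inr (.inr (h.nonempty_mulEquiv_alternatingGroup_five hG hm))))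

end Finite
end IsPoleAction

open Matrix

section Orthogonal

variable {n R : Type*} [Fintype n] [DecidableEq n]

theorem mulVec_dotProduct_mulVec [CommRing R] {A : Matrix n n R} (hA : A ∈ orthogonalGroup n R)
    (v w : n → R) : (A *ᵥ v) ⬝ᵥ (A *ᵥ w) = v ⬝ᵥ w := by
  rw [dotProduct_mulVec, ← mulVec_transpose, mulVec_mulVec, (mem_orthogonalGroup_iff' _ _).mp hA,
    one_mulVec]

theorem adjugate_eq_transpose [CommRing R] {A : Matrix n n R}
    (hA : A ∈ specialOrthogonalGroup n R) : A.adjugate = Aᵀ := by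
  obtain ⟨hA, hdet⟩ := mem_specialOrthogonalGroup_iff.mp hA
  calc A.adjugate = A.adjugate * A * Aᵀ := by
        rw [Matrix.mul_assoc, (mem_orthogonalGroup_iff _ _).mp hA, Matrix.mul_one]
    _ = Aᵀ := by rw [adjugate_mul, hdet, one_smul, Matrix.one_mul]

theorem det_sub_one_eq_zero [CommRing R] [NoZeroDivisors R] [CharZero R] (hn : Odd (Fintype.card n))
    {A : Matrix n n R} (hA : A ∈ specialOrthogonalGroup n R) : (A - 1).det = 0 := by
  obtain ⟨hA, hdet⟩ := mem_specialOrthogonalGroup_iff.mp hA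
  have hneg : (A - 1).det = -(A - 1).det :=
    calc (A - 1).det = (A * (1 - A)ᵀ).det := by
          rw [transpose_sub, transpose_one, Matrix.mul_sub, (mem_orthogonalGroup_iff _ _).mp hA,
            Matrix.mul_one]
      _ = (-(A - 1)).det := by rw [det_mul, hdet, one_mul, det_transpose, neg_sub]
      _ = -(A - 1).det := by rw [det_neg, hn.neg_one_pow, neg_one_mul]
  exact self_eq_neg.mp hneg

theorem exists_unit_mulVec_eq_self (hn : Odd (Fintype.card n)) {A : Matrix n n ℝ}
    (hA : A ∈ specialOrthogonalGroup n ℝ) : ∃ v : n → ℝ, v ⬝ᵥ v = 1 ∧ A *ᵥ v = v := by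
  obtain ⟨v, hv, hAv⟩ := exists_mulVec_eq_zero_iff.mpr (det_sub_one_eq_zero hn hA)
  rw [sub_mulVec, one_mulVec, sub_eq_zero] at hAv
  have hpos : 0 < v ⬝ᵥ v := by simpa using dotProduct_star_self_pos_iff.mpr hv
  refine ⟨(√(v ⬝ᵥ v))⁻¹ • v, ?_, by rw [mulVec_smul, hAv]⟩
  rw [smul_dotProduct, dotProduct_smul, smul_smul, smul_eq_mul, ← mul_inv,
    Real.mul_self_sqrt hpos.le, inv_mul_cancel₀ hpos.ne']

theorem exists_orthogonal_mulVec_single_eq (i : n) {p : n → ℝ} (hp : p ⬝ᵥ p = 1) :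
    ∃ M : orthogonalGroup n ℝ, M.1 *ᵥ Pi.single i 1 = p := by
  have hnorm : ‖WithLp.toLp 2 p‖ = 1 := by
    rw [EuclideanSpace.norm_eq, Real.sqrt_eq_one]
    simpa [dotProduct, sq] using hp
  have horth : Orthonormal ℝ (({i} : Set n).domRestrict fun _ ↦ WithLp.toLp 2 p) :=
    orthonormal_subsingleton_iff.mpr fun _ ↦ hnorm
  obtain ⟨b, hb⟩ := horth.exists_orthonormalBasis_extension_of_card_eq (by simp)
  refine ⟨⟨(EuclideanSpace.basisFun n ℝ).toBasis.toMatrix b,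
    (EuclideanSpace.basisFun n ℝ).toMatrix_orthonormalBasis_mem_orthogonal b⟩, ?_⟩
  ext j
  simp [hb i rfl, Module.Basis.toMatrix_apply]

theorem transpose_mul_mul_mem [CommRing R] {A M : Matrix n n R}
    (hA : A ∈ specialOrthogonalGroup n R) (hM : M ∈ orthogonalGroup n R) :
    Mᵀ * A * M ∈ specialOrthogonalGroup n R := by
  obtain ⟨hA, hdet⟩ := mem_specialOrthogonalGroup_iff.mp hA
  refine mem_specialOrthogonalGroup_iff.mpr ⟨mul_mem (mul_mem ?_ hA) hM, ?_⟩
  · exact (mem_orthogonalGroup_iff _ _).mpr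
      (by rw [transpose_transpose, (mem_orthogonalGroup_iff' _ _).mp hM])
  · rw [det_mul, det_mul, hdet, mul_one, ← det_mul, (mem_orthogonalGroup_iff' _ _).mp hM, det_one]

end Orthogonal

section AxialRotation

/-- The matrix of multiplication by `z` on the `yz`-plane, identified with `ℂ`, extended by the
identity on the `x`-axis. -/
def axialRotation : ℂ →* Matrix (Fin 3) (Fin 3) ℝ where
  toFun z := !![1, 0, 0; 0, z.re, -z.im; 0, z.im, z.re]
  map_one' := by simp [one_fin_three]
  map_mul' _ _ := by
    ext i j
    fin_cases i <;> fin_cases j <;> simp [Matrix.mul_apply, Fin.sum_univ_three] <;> ring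

theorem axialRotation_apply (z : ℂ) :
    axialRotation z = !![1, 0, 0; 0, z.re, -z.im; 0, z.im, z.re] := rfl

theorem axialRotation_injective : Injective axialRotation := fun _ _ h ↦
  Complex.ext (congrFun₂ h 1 1) (congrFun₂ h 2 1)

theorem exists_axialRotation_eq {B : Matrix (Fin 3) (Fin 3) ℝ}
    (hB : B ∈ specialOrthogonalGroup (Fin 3) ℝ) (hfix : B *ᵥ Pi.single 0 1 = Pi.single 0 1) :
    ∃ z, axialRotation z = B := by
  have hfix' : Bᵀ *ᵥ Pi.single 0 1 = Pi.single 0 1 := by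
    rw [← hfix, mulVec_mulVec, hfix,
      (mem_orthogonalGroup_iff' _ _).mp (mem_specialOrthogonalGroup_iff.mp hB).1, one_mulVec]
  have hcol (i) : B i 0 = (Pi.single 0 1 : Fin 3 → ℝ) i := by rw [← hfix, mulVec_single_one]; rfl
  have hrow (j) : B 0 j = (Pi.single 0 1 : Fin 3 → ℝ) j := by rw [← hfix', mulVec_single_one]; rfl
  have hadj := adjugate_eq_transpose hB
  have h11 : B 1 1 = B 2 2 := by simpa [adjugate_fin_three, hcol] using congrFun₂ hadj 2 2
  have h12 : B 1 2 = -B 2 1 := by simpa [adjugate_fin_three, hcol] using (congrFun₂ hadj 2 1).symm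
  refine ⟨⟨B 1 1, B 2 1⟩, ?_⟩
  ext i j
  fin_cases i <;> fin_cases j <;> simp [axialRotation_apply, hcol, hrow, h11, h12]

theorem eq_zero_of_axialRotation_mulVec_eq_self {z : ℂ} (hz : z ≠ 1) {w : Fin 3 → ℝ}
    (hw : axialRotation z *ᵥ w = w) : w 1 = 0 ∧ w 2 = 0 := by
  have hmul : (z - 1) * ⟨w 1, w 2⟩ = 0 := by
    have h1 := congrFun hw 1
    have h2 := congrFun hw 2
    simp only [mulVec, dotProduct, axialRotation_apply, of_apply, cons_val', cons_val_fin_one,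
      cons_val_one, cons_val_zero, cons_val, Fin.sum_univ_three, zero_mul, zero_add,
      neg_mul] at h1 h2
    exact Complex.ext (by simp; linear_combination h1) (by simp; linear_combination h2)
  simpa [Complex.ext_iff] using (mul_eq_zero.mp hmul).resolve_left (sub_ne_zero.mpr hz)

/-- The matrix `axialRotation z` in the orthonormal basis given by the columns of `M`: a rotation
about the axis `M *ᵥ Pi.single 0 1` if `‖z‖ = 1`. -/
noncomputable def rotationAbout (M : orthogonalGroup (Fin 3) ℝ) :
    ℂ →* Matrix (Fin 3) (Fin 3) ℝ :=
  (Unitary.conjStarAlgAut ℝ _ M).toMonoidHom.comp axialRotation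

variable {M : orthogonalGroup (Fin 3) ℝ}

theorem rotationAbout_apply (z : ℂ) : rotationAbout M z = M.1 * axialRotation z * M.1ᵀ :=
  rfl

theorem rotationAbout_injective : Injective (rotationAbout M) :=
  (Unitary.conjStarAlgAut ℝ _ M).injective.comp axialRotation_injective

theorem exists_rotationAbout_eq {A : Matrix (Fin 3) (Fin 3) ℝ}
    (hA : A ∈ specialOrthogonalGroup (Fin 3) ℝ)
    (hfix : A *ᵥ M.1 *ᵥ Pi.single 0 1 = M.1 *ᵥ Pi.single 0 1) : ∃ z, rotationAbout M z = A := by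
  have hM : M.1ᵀ * M.1 = 1 := (mem_orthogonalGroup_iff' _ _).mp M.2
  obtain ⟨z, hz⟩ := exists_axialRotation_eq (transpose_mul_mul_mem hA M.2) <| by
    rw [← mulVec_mulVec, ← mulVec_mulVec, hfix, mulVec_mulVec, hM, one_mulVec]
  exact ⟨z, (congrArg (Unitary.conjStarAlgAut ℝ _ M) hz).trans
    ((Unitary.conjStarAlgAut ℝ _ M).apply_symm_apply A)⟩

theorem exists_eq_smul_of_rotationAbout_mulVec_eq_self {z : ℂ} (hz : z ≠ 1) {v : Fin 3 → ℝ}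
    (hv : rotationAbout M z *ᵥ v = v) : ∃ c : ℝ, v = c • M.1 *ᵥ Pi.single 0 1 := by
  have hM : M.1 * M.1ᵀ = 1 := (mem_orthogonalGroup_iff _ _).mp M.2
  have hM' : M.1ᵀ * M.1 = 1 := (mem_orthogonalGroup_iff' _ _).mp M.2
  set w := M.1ᵀ *ᵥ v with hw
  obtain ⟨hw1, hw2⟩ := eq_zero_of_axialRotation_mulVec_eq_self hz (w := w) <|
    calc axialRotation z *ᵥ w = M.1ᵀ *ᵥ rotationAbout M z *ᵥ v := by
          simp only [rotationAbout_apply, hw, mulVec_mulVec, ← Matrix.mul_assoc, hM',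
            Matrix.one_mul]
      _ = w := by rw [hv]
  refine ⟨w 0, ?_⟩
  have hw0 : w = w 0 • Pi.single 0 1 := by
    ext i
    fin_cases i <;> simp [hw1, hw2]
  rw [← mulVec_smul, ← hw0, hw, mulVec_mulVec, hM, one_mulVec]

theorem eq_or_eq_neg_of_mulVec_eq_self {A : Matrix (Fin 3) (Fin 3) ℝ}
    (hA : A ∈ specialOrthogonalGroup (Fin 3) ℝ) (hA1 : A ≠ 1) {p v : Fin 3 → ℝ}
    (hp : p ⬝ᵥ p = 1) (hAp : A *ᵥ p = p) (hv : v ⬝ᵥ v = 1) (hAv : A *ᵥ v = v) :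
    v = p ∨ v = -p := by
  obtain ⟨M, rfl⟩ := exists_orthogonal_mulVec_single_eq 0 hp
  obtain ⟨z, rfl⟩ := exists_rotationAbout_eq hA hAp
  have hz : z ≠ 1 := fun h ↦ hA1 (by rw [h, map_one])
  obtain ⟨c, rfl⟩ := exists_eq_smul_of_rotationAbout_mulVec_eq_self hz hAv
  rw [smul_dotProduct, dotProduct_smul, hp, smul_eq_mul, smul_eq_mul, mul_one] at hv
  obtain rfl | rfl := mul_self_eq_one_iff.mp hv
  · exact .inl (one_smul ..)
  · exact .inr (neg_one_smul ..)

theorem isCyclic_of_forall_mulVec_eq_self {S : Type*} [Group S] [Finite S]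
    {ρ : S →* Matrix (Fin 3) (Fin 3) ℝ} (hinj : Injective ρ)
    (hρ : ∀ s, ρ s ∈ specialOrthogonalGroup (Fin 3) ℝ) {p : Fin 3 → ℝ} (hp : p ⬝ᵥ p = 1)
    (hfix : ∀ s, ρ s *ᵥ p = p) : IsCyclic S := by
  obtain ⟨M, rfl⟩ := exists_orthogonal_mulVec_single_eq 0 hp
  choose z hz using fun s ↦ exists_rotationAbout_eq (hρ s) (hfix s)
  let f : S →* ℂ :=
    { toFun := z
      map_one' := rotationAbout_injective (by rw [hz, map_one, map_one])
      map_mul' := fun s t ↦ rotationAbout_injective (by rw [hz, map_mul, map_mul, hz, hz]) }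
  refine isCyclic_of_injective_ringHom f fun s t hst ↦ hinj ?_
  rw [← hz, ← hz]
  exact congrArg (rotationAbout M) hst

end AxialRotation

section Pole

variable {G n R : Type*} [Group G] [Fintype n] [DecidableEq n] [CommRing R]

/-- The poles of a group acting on `n`-space through the orthogonal representation `ρ`: the unit
vectors fixed by some nontrivial element of the group. -/
def Pole (ρ : G →* orthogonalGroup n R) : Type _ :=
  {v : n → R // v ⬝ᵥ v = 1 ∧ ∃ g, g ≠ 1 ∧ (ρ g).1 *ᵥ v = v}

namespace Pole

variable {ρ : G →* orthogonalGroup n R}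

instance : InvolutiveNeg (Pole ρ) where
  neg p := ⟨-p.1, by rw [neg_dotProduct_neg, p.2.1], by
    obtain ⟨g, hg, hp⟩ := p.2.2
    exact ⟨g, hg, by rw [mulVec_neg, hp]⟩⟩
  neg_neg p := Subtype.ext (neg_neg p.1)

instance : MulAction G (Pole ρ) where
  smul g p := ⟨(ρ g).1 *ᵥ p.1, by rw [mulVec_dotProduct_mulVec (ρ g).2, p.2.1], by
    obtain ⟨k, hk, hp⟩ := p.2.2
    refine ⟨g * k * g⁻¹, conj_eq_one_iff.not.mpr hk, ?_⟩
    rw [mulVec_mulVec, ← Submonoid.coe_mul, ← map_mul, inv_mul_cancel_right, map_mul,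
      Submonoid.coe_mul, ← mulVec_mulVec, hp]⟩
  one_smul p := Subtype.ext <|
    show (ρ 1).1 *ᵥ p.1 = p.1 by rw [map_one, OneMemClass.coe_one, one_mulVec]
  mul_smul g k p := Subtype.ext <|
    show (ρ (g * k)).1 *ᵥ p.1 = (ρ g).1 *ᵥ (ρ k).1 *ᵥ p.1 by
      rw [map_mul, Submonoid.coe_mul, mulVec_mulVec]

theorem smul_eq_self_iff {g : G} {p : Pole ρ} : g • p = p ↔ (ρ g).1 *ᵥ p.1 = p.1 :=
  Subtype.ext_iff

theorem smul_neg (g : G) (p : Pole ρ) : g • -p = -(g • p) :=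
  Subtype.ext (mulVec_neg p.1 (ρ g).1)

theorem neg_ne [NeZero (2 : R)] (p : Pole ρ) : -p ≠ p := fun h ↦ by
  have hneg : -(1 : R) = 1 :=
    calc -(1 : R) = -p.1 ⬝ᵥ p.1 := by rw [neg_dotProduct, p.2.1]
      _ = p.1 ⬝ᵥ p.1 := congrArg (· ⬝ᵥ p.1) (congrArg Subtype.val h)
      _ = 1 := p.2.1
  exact two_ne_zero (α := R) (by linear_combination -hneg)

theorem stabilizer_ne_bot (p : Pole ρ) : stabilizer G p ≠ ⊥ := by
  obtain ⟨g, hg, hp⟩ := p.2.2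
  exact fun h ↦ hg (Subgroup.mem_bot.mp (h ▸ smul_eq_self_iff.mpr hp))

end Pole

variable {ρ : G →* orthogonalGroup (Fin 3) ℝ}

theorem Pole.exists_fixedBy_eq (hρ : Injective ρ) (hdet : ∀ g, (ρ g).1.det = 1) {g : G}
    (hg : g ≠ 1) : ∃ p : Pole ρ, fixedBy (Pole ρ) g = {p, -p} := by
  have hmem : (ρ g).1 ∈ specialOrthogonalGroup (Fin 3) ℝ := ⟨(ρ g).2, hdet g⟩
  have hne : (ρ g).1 ≠ 1 := fun h ↦
    hg (hρ ((Subtype.ext h).trans (map_one ρ).symm))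
  obtain ⟨v, hv, hgv⟩ := exists_unit_mulVec_eq_self (by decide) hmem
  refine ⟨⟨v, hv, g, hg, hgv⟩, ?_⟩
  ext q
  constructor
  · intro hq
    exact (eq_or_eq_neg_of_mulVec_eq_self hmem hne hv hgv q.2.1 (smul_eq_self_iff.mp hq)).imp
      Subtype.ext Subtype.ext
  · rintro (rfl | rfl)
    · exact Subtype.ext hgv
    · exact Subtype.ext ((mulVec_neg v _).trans (congrArg _ hgv))

theorem Pole.isCyclic_stabilizer [Finite G] (hρ : Injective ρ)
    (hdet : ∀ g, (ρ g).1.det = 1) (p : Pole ρ) : IsCyclic (stabilizer G p) :=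
  isCyclic_of_forall_mulVec_eq_self
    (ρ := ((orthogonalGroup (Fin 3) ℝ).subtype.comp ρ).comp (stabilizer G p).subtype)
    ((Subtype.val_injective.comp hρ).comp (stabilizer G p).subtype_injective)
    (fun g ↦ ⟨(ρ g).2, hdet g⟩) p.2.1 fun g ↦ smul_eq_self_iff.mp g.2

theorem isPoleAction_pole [Finite G] (hρ : Injective ρ) (hdet : ∀ g, (ρ g).1.det = 1) :
    IsPoleAction G (Pole ρ) where
  smul_neg := Pole.smul_neg
  neg_ne := Pole.neg_ne
  exists_fixedBy_eq _ := Pole.exists_fixedBy_eq hρ hdet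
  stabilizer_ne_bot := Pole.stabilizer_ne_bot
  isCyclic_stabilizer := Pole.isCyclic_stabilizer hρ hdet

end Pole

end FiniteSubgroupSO3

/-- Classification of finite subgroups of `SO(3, ℝ)` (realized as the subgroups `G` of the
orthogonal group `O(3, ℝ)` all of whose elements have determinant `1`): every such finite
group is isomorphic to a cyclic group `ℤ/nℤ` (`n ≥ 1`), a dihedral group of order `2n`
(`n ≥ 2`), the tetrahedral group `A₄`, the cube/octahedral group `S₄`, or the
icosahedral/dodecahedral group `A₅`. -/
theorem finite_subgroup_so3_classification
    (G : Subgroup (Matrix.orthogonalGroup (Fin 3) ℝ)) (hG : Finite G)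
    (hdet : ∀ g ∈ G, Matrix.det (g : Matrix (Fin 3) (Fin 3) ℝ) = 1) :
    (∃ n : ℕ, 1 ≤ n ∧ Nonempty (G ≃* Multiplicative (ZMod n))) ∨
    (∃ n : ℕ, 2 ≤ n ∧ Nonempty (G ≃* DihedralGroup n)) ∨
    Nonempty (G ≃* alternatingGroup (Fin 4)) ∨
    Nonempty (G ≃* Equiv.Perm (Fin 4)) ∨
    Nonempty (G ≃* alternatingGroup (Fin 5)) := by
  have hpole : FiniteSubgroupSO3.IsPoleAction G (FiniteSubgroupSO3.Pole G.subtype) :=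
    FiniteSubgroupSO3.isPoleAction_pole G.subtype_injective fun g ↦ hdet g g.2
  exact hpole.classification
end

section
/- Every finite subgroup of PGL(2, ℂ) = GL(2, ℂ)/Z, where Z is the center of GL(2, ℂ) (the nonzero scalar matrices), is isomorphic as an abstract group to one of: a cyclic group ℤ/nℤ for some n ≥ 1, a dihedral group of order 2n for some n ≥ 2, the alternating group A₄, the symmetric group S₄, or the alternating group A₅. -/
/-!
A nontrivial element of `PGL(2, K)` whose finite order is invertible in `K` comes from a
diagonalizable matrix, so over the algebraic closure it fixes exactly two points of the projective
line. The stabilizer of a point embeds into the multiplicative group through the ratio of the two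
eigenvalues, so in a finite group `G` of invertible order it is cyclic. Counting the pairs
`(g, x)` with `g ≠ 1` and `g x = x` shows that these points fall into at most three orbits.
Apart from the trivial group, there are either two orbits, whose points are fixed by all of `G`,
or three orbits, whose stabilizer orders satisfy `1/a + 1/b + 1/c = 1 + 2/|G|`. In the case
`(2, 2, n)` the group is dihedral. In the cases `(2, 3, 3)` and `(2, 3, 4)` it acts faithfully on
its four Sylow `3`-subgroups, and in the case `(2, 3, 5)` on its five Sylow `2`-subgroups.
-/

section SylowPrimeOrder

open Subgroup

variable {G : Type*} [Group G] {p : ℕ}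

theorem mem_sylow_of_smul_eq {t : G} (ht : IsPGroup p (zpowers t)) {Q : Sylow p G}
    (h : t • Q = Q) : t ∈ Q := by
  have hmem : t ∈ zpowers t ⊓ normalizer (Q : Set G) :=
    ⟨mem_zpowers t, Sylow.smul_eq_iff_mem_normalizer.mp h⟩
  rw [ht.inf_normalizer_sylow Q] at hmem
  exact hmem.2

variable [Fact p.Prime] (hp : ∀ g : G, p ∣ orderOf g → orderOf g = p)
include hp

theorem isPGroup_centralizer_singleton {t : G} (ht : orderOf t = p) :
    IsPGroup p (centralizer {t}) := by
  rw [IsPGroup.iff_orderOf]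
  rintro ⟨s, hs⟩
  have hst : Commute s t := mem_centralizer_singleton_iff.mp hs
  simp only [orderOf_mk]
  by_cases hps : p ∣ orderOf s
  · exact ⟨1, by rw [pow_one, hp s hps]⟩
  · have hcop : (orderOf s).Coprime (orderOf t) :=
      ht ▸ ((Nat.Prime.coprime_iff_not_dvd Fact.out).mpr hps).symm
    have hmul := hst.orderOf_mul_eq_mul_orderOf_of_coprime hcop
    rw [ht] at hmul
    rw [hp (s * t) (hmul ▸ dvd_mul_left p _)] at hmul
    exact ⟨0, by simpa [NeZero.ne p] using hmul.symm⟩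

theorem orderOf_eq_prime_of_mem_sylow {P : Sylow p G} {t : G} (htP : t ∈ P) (ht : t ≠ 1) :
    orderOf t = p := by
  obtain ⟨k, hk⟩ := IsPGroup.iff_orderOf.mp P.isPGroup' ⟨t, htP⟩
  rw [orderOf_mk] at hk
  refine hp t (hk ▸ dvd_pow_self p ?_)
  rintro rfl
  exact ht (orderOf_eq_one_iff.mp (by simpa using hk))

theorem centralizer_singleton_eq_sylow {P : Sylow p G} [IsMulCommutative P] {t : G} (htP : t ∈ P)
    (ht : t ≠ 1) :
    centralizer {t} = P :=
  P.is_maximal' (isPGroup_centralizer_singleton hp (orderOf_eq_prime_of_mem_sylow hp htP ht))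
    ((le_centralizer (P : Subgroup G)).trans
      (centralizer_le (Set.singleton_subset_iff.mpr htP)))

-- The normalizer of an abelian Sylow subgroup controls fusion in it, so the conjugates of `t` in
-- `P` form one orbit of the normalizer, and the stabilizer of `t` in the normalizer is `P`.
theorem card_sylow_mul_ncard_isConj [Finite G] {P : Sylow p G} [IsMulCommutative P] {t : G}
    (htP : t ∈ P) (ht : t ≠ 1) :
    Nat.card (Sylow p G) * {x | x ∈ P ∧ IsConj t x}.ncard = (P : Subgroup G).index := by
  let N := normalizer (P : Set G)
  let _ : MulAction N G := MulAction.compHom G ((MulAut.conj : G →* MulAut G).comp N.subtype)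
  have smul_eq (n : N) (x : G) : n • x = n * x * (n : G)⁻¹ := rfl
  have horbit : MulAction.orbit N t = {x | x ∈ P ∧ IsConj t x} := by
    ext x
    constructor
    · rintro ⟨n, rfl⟩
      exact ⟨(mem_normalizer_iff.mp n.2 t).mp htP, isConj_iff.mpr ⟨n, rfl⟩⟩
    · rintro ⟨hxP, hx⟩
      obtain ⟨g, rfl⟩ := isConj_iff.mp hx
      obtain ⟨n, hn, hgn⟩ := P.conj_eq_normalizer_conj_of_mem t g⁻¹ htP (by simpa using hxP)
      exact ⟨⟨n⁻¹, inv_mem hn⟩, by simpa [smul_eq] using hgn.symm⟩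
  have hstab : MulAction.stabilizer N t = (P : Subgroup G).subgroupOf N := by
    ext n
    rw [MulAction.mem_stabilizer_iff, smul_eq, mul_inv_eq_iff_eq_mul, mem_subgroupOf,
      ← centralizer_singleton_eq_sylow hp htP ht, mem_centralizer_singleton_iff]
  rw [← horbit, ← MulAction.index_stabilizer, hstab, P.card_eq_index_normalizer, mul_comm]
  exact relIndex_mul_index le_normalizer

-- Distinct Sylow subgroups meet trivially, each being the centralizer of its nontrivial elements.
-- So the kernel `K` meets every Sylow subgroup trivially, and as both are normalized by each other,
-- they commute.
theorem injective_toPermHom_sylow [Nontrivial (Sylow p G)]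
    (hcomm : ∀ P : Sylow p G, IsMulCommutative P) :
    Function.Injective (MulAction.toPermHom G (Sylow p G)) := by
  set K := (MulAction.toPermHom G (Sylow p G)).ker with hK
  have smul_eq {x : G} (hx : x ∈ K) (Q : Sylow p G) : x • Q = Q :=
    congrArg (fun σ : Equiv.Perm (Sylow p G) ↦ σ Q) (MonoidHom.mem_ker.mp hx)
  have hdisj (P : Sylow p G) {t : G} (htK : t ∈ K) (htP : t ∈ P) : t = 1 := by
    by_contra ht
    obtain ⟨Q, hQ⟩ := exists_ne P
    have htQ : t ∈ Q :=
      mem_sylow_of_smul_eq (P.isPGroup'.to_le (zpowers_le.mpr htP)) (smul_eq htK Q)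
    exact hQ (Sylow.ext ((centralizer_singleton_eq_sylow hp htQ ht).symm.trans
      (centralizer_singleton_eq_sylow hp htP ht)))
  rw [← MonoidHom.ker_eq_bot_iff, ← hK, eq_bot_iff_forall]
  intro x hx
  obtain ⟨P, Q, hPQ⟩ := exists_pair_ne (Sylow p G)
  obtain ⟨t, htP, ht⟩ : ∃ t ∈ P, t ≠ 1 := by
    by_contra! hP
    have hle : (P : Subgroup G) ≤ Q := fun y hy ↦ hP y hy ▸ one_mem _
    exact hPQ (Sylow.ext (P.is_maximal' Q.isPGroup' hle)).symm
  have hcommutator : x * t * x⁻¹ * t⁻¹ = 1 := by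
    refine hdisj P ?_ (mul_mem ?_ (inv_mem htP))
    · rw [mul_assoc, mul_assoc, ← mul_assoc t]
      exact mul_mem hx ((MonoidHom.normal_ker _).conj_mem _ (inv_mem hx) t)
    · exact (mem_normalizer_iff.mp (Sylow.smul_eq_iff_mem_normalizer.mp (smul_eq hx P)) t).mp htP
  refine hdisj P hx ?_
  change x ∈ (P : Subgroup G)
  rw [← centralizer_singleton_eq_sylow hp htP ht, mem_centralizer_singleton_iff]
  exact mul_inv_eq_iff_eq_mul.mp (mul_inv_eq_one.mp hcommutator)

end SylowPrimeOrder

section SylowCount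

variable {G : Type*} [Group G] [Finite G]

theorem card_sylow_eq_pow {p k m : ℕ} [Fact p.Prime] (hG : Nat.card G = p ^ k * m) (hm : ¬ p ∣ m)
    (P : Sylow p G) : Nat.card P = p ^ k := by
  have hp : p.Prime := Fact.out
  have hm0 : m ≠ 0 := by rintro rfl; exact hm (dvd_zero p)
  rw [P.card_eq_multiplicity, hG, Nat.factorization_mul (pow_ne_zero k hp.ne_zero) hm0,
    Finsupp.add_apply, hp.factorization_pow, Finsupp.single_eq_same,
    Nat.factorization_eq_zero_of_not_dvd hm, add_zero]

theorem index_sylow_eq {p k m : ℕ} [Fact p.Prime] (hG : Nat.card G = p ^ k * m) (hm : ¬ p ∣ m)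
    (P : Sylow p G) : (P : Subgroup G).index = m := by
  have h := (P : Subgroup G).card_mul_index
  rw [card_sylow_eq_pow hG hm P, hG] at h
  exact Nat.eq_of_mul_eq_mul_left (pow_pos (NeZero.pos p) k) h

theorem ncard_isConj_mem_lt {H : Subgroup G} {t : G} (ht : t ≠ 1) :
    {x | x ∈ H ∧ IsConj t x}.ncard < Nat.card H :=
  Set.ncard_lt_ncard ⟨fun _ hx ↦ hx.1, fun h ↦ ht (isConj_one_left.mp (h H.one_mem).2)⟩
    (Set.toFinite (H : Set G))

theorem card_sylow_three_eq_four {m : ℕ} (hG : Nat.card G = 3 * m) (hm : m = 4 ∨ m = 8)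
    (h3 : ∀ g : G, 3 ∣ orderOf g → orderOf g = 3) : Nat.card (Sylow 3 G) = 4 := by
  obtain ⟨P⟩ : Nonempty (Sylow 3 G) := inferInstance
  have hm3 : ¬ 3 ∣ m := by lia
  have hcard : Nat.card P = 3 := card_sylow_eq_pow (k := 1) hG hm3 P
  have : IsCyclic P := isCyclic_of_prime_card hcard
  obtain ⟨t, ht⟩ : ∃ t : P, t ≠ 1 :=
    have := Finite.one_lt_card_iff_nontrivial.mp (hcard ▸ Nat.one_lt_ofNat)
    exists_ne 1
  have ht1 : (t : G) ≠ 1 := by simpa using ht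
  have hfusion : {x | x ∈ P ∧ IsConj (t : G) x}.ncard < 3 :=
    (ncard_isConj_mem_lt ht1).trans_eq hcard
  have hmul := card_sylow_mul_ncard_isConj h3 t.2 ht1
  rw [index_sylow_eq (k := 1) hG hm3 P] at hmul
  have hmod : Nat.card (Sylow 3 G) % 3 = 1 := card_sylow_modEq_one 3 G
  generalize {x | x ∈ P ∧ IsConj (t : G) x}.ncard = f at *
  interval_cases f <;> lia

theorem card_sylow_two_eq_five (hG : Nat.card G = 60)
    (h2 : ∀ g : G, 2 ∣ orderOf g → orderOf g = 2)
    (hconj : ∀ s t : G, orderOf s = 2 → orderOf t = 2 → IsConj s t) :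
    Nat.card (Sylow 2 G) = 5 := by
  obtain ⟨P⟩ : Nonempty (Sylow 2 G) := inferInstance
  have hcard : Nat.card P = 2 ^ 2 := card_sylow_eq_pow (m := 15) hG (by decide) P
  have := IsPGroup.isMulCommutative_of_card_eq_prime_sq hcard
  obtain ⟨t, ht⟩ : ∃ t : P, t ≠ 1 :=
    have := Finite.one_lt_card_iff_nontrivial.mp (by rw [hcard]; decide)
    exists_ne 1
  have ht1 : (t : G) ≠ 1 := by simpa using ht
  have hfusion : {x | x ∈ P ∧ IsConj (t : G) x} = (P : Set G) \ {1} := by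
    ext x
    refine and_congr_right fun hx ↦ ⟨?_, fun hx1 ↦ hconj _ _ ?_ ?_⟩
    · rintro htx rfl
      exact ht1 (isConj_one_left.mp htx)
    · exact orderOf_eq_prime_of_mem_sylow h2 t.2 ht1
    · exact orderOf_eq_prime_of_mem_sylow h2 hx hx1
  have hmul := card_sylow_mul_ncard_isConj h2 t.2 ht1
  rw [hfusion, Set.ncard_sdiff_singleton_of_mem (one_mem P),
    index_sylow_eq (k := 2) (m := 15) hG (by decide) P] at hmul
  change Nat.card (Sylow 2 G) * (Nat.card P - 1) = 15 at hmul
  rw [hcard] at hmul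
  lia

end SylowCount

section Recognition

variable {G : Type*} [Group G]

theorem exists_injective_hom_perm_fin {α : Type*} [MulAction G α] {n : ℕ} [NeZero n]
    (hα : Nat.card α = n) (h : Function.Injective (MulAction.toPermHom G α)) :
    ∃ f : G →* Equiv.Perm (Fin n), Function.Injective f := by
  have : Finite α := Nat.finite_of_card_ne_zero (hα ▸ NeZero.ne n)
  let e := (Finite.equivFinOfCardEq hα).permCongrHom
  exact ⟨e.toMonoidHom.comp (MulAction.toPermHom G α), e.injective.comp h⟩

theorem nonempty_mulEquiv_perm_fin {n : ℕ} (hG : Nat.card G = n.factorial)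
    {f : G →* Equiv.Perm (Fin n)} (hf : Function.Injective f) :
    Nonempty (G ≃* Equiv.Perm (Fin n)) :=
  ⟨.ofBijective f <| (Nat.bijective_iff_injective_and_card f).mpr
    ⟨hf, by rw [hG, Nat.card_perm, Nat.card_fin]⟩⟩

theorem nonempty_mulEquiv_alternatingGroup_fin {n : ℕ} (hG : 2 * Nat.card G = n.factorial)
    {f : G →* Equiv.Perm (Fin n)} (hf : Function.Injective f) :
    Nonempty (G ≃* alternatingGroup (Fin n)) := by
  have hindex : f.range.index = 2 := by
    have h := f.range.index_mul_card
    rw [Nat.card_perm, Nat.card_fin, ← hG,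
      ← Nat.card_congr (MonoidHom.ofInjective hf).toEquiv] at h
    have hpos : Nat.card G ≠ 0 := by
      intro h0
      exact n.factorial_ne_zero (by rw [← hG, h0])
    exact Nat.eq_of_mul_eq_mul_right (Nat.pos_of_ne_zero hpos) h
  exact ⟨(MonoidHom.ofInjective hf).trans
    (MulEquiv.subgroupCongr (Equiv.Perm.eq_alternatingGroup_of_index_eq_two hindex))⟩

theorem exists_injective_hom_perm_fin_four [Finite G] {m : ℕ} (hG : Nat.card G = 3 * m)
    (hm : m = 4 ∨ m = 8) (h3 : ∀ g : G, 3 ∣ orderOf g → orderOf g = 3) :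
    ∃ f : G →* Equiv.Perm (Fin 4), Function.Injective f := by
  have hS := card_sylow_three_eq_four hG hm h3
  have : Nontrivial (Sylow 3 G) := Finite.one_lt_card_iff_nontrivial.mp (hS ▸ Nat.one_lt_ofNat)
  refine exists_injective_hom_perm_fin hS (injective_toPermHom_sylow h3 fun P ↦ ?_)
  have : IsCyclic P := isCyclic_of_prime_card (p := 3) (card_sylow_eq_pow (k := 1) hG (by lia) P)
  infer_instance

theorem exists_injective_hom_perm_fin_five [Finite G] (hG : Nat.card G = 60)
    (h2 : ∀ g : G, 2 ∣ orderOf g → orderOf g = 2)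
    (hconj : ∀ s t : G, orderOf s = 2 → orderOf t = 2 → IsConj s t) :
    ∃ f : G →* Equiv.Perm (Fin 5), Function.Injective f := by
  have hS := card_sylow_two_eq_five hG h2 hconj
  have : Nontrivial (Sylow 2 G) := Finite.one_lt_card_iff_nontrivial.mp (hS ▸ Nat.one_lt_ofNat)
  exact exists_injective_hom_perm_fin hS (injective_toPermHom_sylow h2 fun P ↦
    IsPGroup.isMulCommutative_of_card_eq_prime_sq (card_sylow_eq_pow (m := 15) hG (by decide) P))

end Recognition

section Dihedral

variable {G : Type*} [Group G]

/-- The homomorphism from the dihedral group of order `2 * n` determined by its restriction `f` to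
the rotations and the image `s` of a reflection, which has to be an involution inverting `f`. -/
def dihedralHom {n : ℕ} (f : Multiplicative (ZMod n) →* G) (s : G) (hs : s * s = 1)
    (hf : ∀ i, s * f i * s = (f i)⁻¹) : DihedralGroup n →* G where
  toFun
    | .r i => f (.ofAdd i)
    | .sr i => s * f (.ofAdd i)
  map_one' := f.map_one
  map_mul' := by
    have hswap (i) : f i * s = s * (f i)⁻¹ := by
      rw [← hf, ← mul_assoc, ← mul_assoc, hs, one_mul]
    rintro (i | i) (j | j)
    · simp [ofAdd_add]
    · simp only [DihedralGroup.r_mul_sr, ofAdd_sub]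
      rw [← mul_assoc, hswap, mul_assoc, ← map_inv, ← map_mul, inv_mul_eq_div]
    · simp [ofAdd_add, mul_assoc]
    · simp only [DihedralGroup.sr_mul_sr, ofAdd_sub]
      rw [mul_assoc, ← mul_assoc _ s, hswap, mul_assoc, ← mul_assoc s, hs, one_mul, ← map_inv,
        ← map_mul, inv_mul_eq_div]

theorem injective_dihedralHom {n : ℕ} {f : Multiplicative (ZMod n) →* G} {s : G} {hs : s * s = 1}
    {hf : ∀ i, s * f i * s = (f i)⁻¹} (hinj : Function.Injective f) (hsf : s ∉ f.range) :
    Function.Injective (dihedralHom f s hs hf) := by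
  rw [injective_iff_map_eq_one]
  rintro (i | i) h
  · have hi : f (.ofAdd i) = 1 := h
    rw [map_eq_one_iff f hinj, ofAdd_eq_one] at hi
    rw [hi, DihedralGroup.one_def]
  · have hi : s * f (.ofAdd i) = 1 := h
    exact absurd ⟨(.ofAdd i)⁻¹, by rw [map_inv, eq_inv_of_mul_eq_one_left hi]⟩ hsf

theorem nonempty_mulEquiv_dihedralGroup_of_index_two [Finite G] {C : Subgroup G} [IsCyclic C]
    (hC : C.index = 2) (h : ∀ g ∉ C, g * g = 1) : Nonempty (G ≃* DihedralGroup (Nat.card C)) := by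
  obtain ⟨s, hs⟩ : ∃ s, s ∉ C := by
    by_contra! htop
    simp [(Subgroup.eq_top_iff' C).mpr htop] at hC
  let f := C.subtype.comp (zmodCyclicMulEquiv ‹IsCyclic C›).toMonoidHom
  have hf_mem (i) : f i ∈ C := SetLike.coe_mem _
  have hrel (i) : s * f i * s = (f i)⁻¹ :=
    eq_inv_of_mul_eq_one_left <| by
      simpa only [mul_assoc] using
        h (s * f i) fun hi ↦ hs ((C.mul_mem_cancel_right (hf_mem i)).mp hi)
  let φ := dihedralHom f s (h s hs) hrel
  have hφ : Function.Injective φ := by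
    refine injective_dihedralHom (C.subtype_injective.comp (MulEquiv.injective _)) ?_
    rintro ⟨i, rfl⟩
    exact hs (hf_mem i)
  refine ⟨(MulEquiv.ofBijective φ ((Nat.bijective_iff_injective_and_card φ).mpr ⟨hφ, ?_⟩)).symm⟩
  rw [DihedralGroup.nat_card, ← C.index_mul_card, hC]

end Dihedral

section Poles

open MulAction

/-- The poles of a group action: the points with nontrivial stabilizer. For a finite group of
rotations of the sphere, these are the points where the rotation axes meet the sphere. -/
def poles (G X : Type*) [Group G] [MulAction G X] : SubMulAction G X where
  carrier := {x | ∃ g : G, g ≠ 1 ∧ g • x = x}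
  smul_mem' c x := by
    rintro ⟨g, hg, hx⟩
    refine ⟨c * g * c⁻¹, conj_eq_one_iff.not.mpr hg, ?_⟩
    rw [smul_smul, inv_mul_cancel_right, mul_smul, hx]

/-- Representatives `H i` of the conjugacy classes of pole stabilizers of a finite rotation group,
one for each orbit of poles. The field `sum_index` is Burnside's orbit count for the action on the
poles, arranged so that no subtraction occurs. -/
structure IsPoleSystem {G ι : Type*} [Group G] [Fintype ι] (H : ι → Subgroup G) : Prop where
  isCyclic (i : ι) : IsCyclic (H i)
  one_lt_card (i : ι) : 1 < Nat.card (H i)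
  exists_conj_mem (g : G) : g ≠ 1 → ∃ i a, a * g * a⁻¹ ∈ H i
  sum_index : 2 * Nat.card G + ∑ i, (H i).index = Fintype.card ι * Nat.card G + 2

variable {G X : Type*} [Group G] [MulAction G X]

theorem ncard_fixedBy_poles {g : G} (hg : g ≠ 1) :
    (fixedBy (poles G X) g).ncard = (fixedBy X g).ncard := by
  rw [← Set.ncard_image_of_injective _ Subtype.val_injective]
  congr 1
  ext x
  constructor
  · rintro ⟨y, hy, rfl⟩
    exact congrArg Subtype.val hy
  · exact fun hx ↦ ⟨⟨x, g, hg, hx⟩, Subtype.ext hx, rfl⟩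

theorem card_poles_eq_sum_index [Finite G] [Finite (poles G X)]
    [Fintype (orbitRel.Quotient G (poles G X))] :
    Nat.card (poles G X) =
      ∑ ω : orbitRel.Quotient G (poles G X), (stabilizer G (Quotient.out ω)).index := by
  rw [Nat.card_congr (selfEquivSigmaOrbitsQuotientStabilizer G (poles G X)), Nat.card_sigma]
  rfl

variable [Finite G] (hfix : ∀ g : G, g ≠ 1 → (fixedBy X g).ncard = 2)
include hfix

theorem finite_poles : Finite (poles G X) := by
  have hunion : (poles G X : Set X) = ⋃ g : {g : G // g ≠ 1}, fixedBy X g.1 := by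
    ext x
    simp only [Set.mem_iUnion, Subtype.exists, exists_prop]
    rfl
  refine Set.Finite.subset (Set.finite_iUnion fun g : {g : G // g ≠ 1} ↦ ?_) hunion.subset
  exact Set.finite_of_ncard_ne_zero (hfix g g.2 ▸ two_ne_zero)

theorem card_poles_add_two_mul_card [Fintype (orbitRel.Quotient G (poles G X))] :
    Nat.card (poles G X) + 2 * Nat.card G =
      Fintype.card (orbitRel.Quotient G (poles G X)) * Nat.card G + 2 := by
  classical
  have := Fintype.ofFinite G
  have := finite_poles hfix
  have := Fintype.ofFinite (poles G X)
  have hburnside := sum_card_fixedBy_eq_card_orbits_mul_card_group G (poles G X)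
  have hne (g : G) (hg : g ∈ Finset.univ.erase 1) : Fintype.card (fixedBy (poles G X) g) = 2 := by
    have hg1 := Finset.ne_of_mem_erase hg
    rw [Fintype.card_eq_nat_card, Nat.card_coe_set_eq, ncard_fixedBy_poles hg1, hfix g hg1]
  have hone : Fintype.card (fixedBy (poles G X) (1 : G)) = Fintype.card (poles G X) := by
    rw [Fintype.card_eq_nat_card, fixedBy_one_eq_univ, Nat.card_univ, Nat.card_eq_fintype_card]
  rw [← Finset.add_sum_erase _ _ (Finset.mem_univ (1 : G)), hone, Finset.sum_congr rfl hne,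
    Finset.sum_const, Finset.card_erase_of_mem (Finset.mem_univ _), Finset.card_univ,
    smul_eq_mul] at hburnside
  have hpos : 0 < Fintype.card G := Fintype.card_pos
  simp only [Nat.card_eq_fintype_card]
  convert congrArg (· + 2) hburnside using 1
  lia

theorem isPoleSystem_stabilizer_out [Fintype (orbitRel.Quotient G (poles G X))]
    (hcyc : ∀ x : X, IsCyclic (stabilizer G x)) :
    IsPoleSystem fun ω : orbitRel.Quotient G (poles G X) ↦ stabilizer G (Quotient.out ω) where
  isCyclic ω := SubMulAction.stabilizer_of_subMul (Quotient.out ω) ▸ hcyc _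
  one_lt_card ω := by
    obtain ⟨g, hg, hx⟩ := (Quotient.out ω).2
    rw [Subgroup.one_lt_card_iff_ne_bot, Subgroup.ne_bot_iff_exists_ne_one]
    exact ⟨⟨g, Subtype.ext hx⟩, fun h ↦ hg (congrArg Subtype.val h)⟩
  exists_conj_mem g hg := by
    obtain ⟨x, hx⟩ : (fixedBy X g).Nonempty :=
      Set.nonempty_of_ncard_ne_zero (hfix g hg ▸ two_ne_zero)
    let y : poles G X := ⟨x, g, hg, hx⟩
    have hgy : g • y = y := Subtype.ext hx
    obtain ⟨a, ha⟩ : Quotient.out ⟦y⟧ ∈ orbit G y :=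
      Quotient.mk_out (s := orbitRel G (poles G X)) y
    refine ⟨⟦y⟧, a, ?_⟩
    rw [mem_stabilizer_iff, ← ha]
    simp only [smul_smul, inv_mul_cancel_right, mul_smul, hgy]
  sum_index := by
    have := finite_poles hfix
    rw [← card_poles_eq_sum_index, add_comm, card_poles_add_two_mul_card hfix]

end Poles

section Classification

/-- The groups occurring in the classification of the finite groups of rotations of the sphere:
cyclic, dihedral (including the Klein four-group `DihedralGroup 2`), tetrahedral, octahedral and
icosahedral. -/
def IsRotationGroup (G : Type*) [Group G] : Prop :=
  (∃ n : ℕ, 1 ≤ n ∧ Nonempty (G ≃* Multiplicative (ZMod n))) ∨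
  (∃ n : ℕ, 2 ≤ n ∧ Nonempty (G ≃* DihedralGroup n)) ∨
  Nonempty (G ≃* alternatingGroup (Fin 4)) ∨
  Nonempty (G ≃* Equiv.Perm (Fin 4)) ∨
  Nonempty (G ≃* alternatingGroup (Fin 5))

variable {G G' : Type*} [Group G] [Group G']

theorem IsRotationGroup.of_mulEquiv (e : G ≃* G') (h : IsRotationGroup G') :
    IsRotationGroup G := by
  rcases h with ⟨n, hn, ⟨f⟩⟩ | ⟨n, hn, ⟨f⟩⟩ | ⟨⟨f⟩⟩ | ⟨⟨f⟩⟩ | ⟨⟨f⟩⟩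
  · exact .inl ⟨n, hn, ⟨e.trans f⟩⟩
  · exact .inr (.inl ⟨n, hn, ⟨e.trans f⟩⟩)
  · exact .inr (.inr (.inl ⟨e.trans f⟩))
  · exact .inr (.inr (.inr (.inl ⟨e.trans f⟩)))
  · exact .inr (.inr (.inr (.inr ⟨e.trans f⟩)))

theorem IsRotationGroup.of_isCyclic [Finite G] [IsCyclic G] : IsRotationGroup G :=
  .inl ⟨Nat.card G, Nat.card_pos, ⟨(zmodCyclicMulEquiv ‹IsCyclic G›).symm⟩⟩

theorem orderOf_dvd_card_of_conj_mem {H : Subgroup G} {a g : G} (h : a * g * a⁻¹ ∈ H) :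
    orderOf g ∣ Nat.card H := by
  have hconj : orderOf (a * g * a⁻¹) = orderOf g := (MulAut.conj a).orderOf_eq g
  exact hconj ▸ H.orderOf_dvd_natCard h

theorem isConj_of_conj_mem_of_card_eq_two {A : Subgroup G} (hA : Nat.card A = 2) {s t : G}
    (hs : s ≠ 1) (ht : t ≠ 1) (hsA : ∃ a, a * s * a⁻¹ ∈ A) (htA : ∃ b, b * t * b⁻¹ ∈ A) :
    IsConj s t := by
  obtain ⟨a, ha⟩ := hsA
  obtain ⟨b, hb⟩ := htA
  obtain ⟨u, -, hu⟩ := (Nat.card_eq_two_iff' (1 : A)).mp hA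
  have hua := hu ⟨_, ha⟩ (mt (congrArg Subtype.val) (conj_eq_one_iff.not.mpr hs))
  have hub := hu ⟨_, hb⟩ (mt (congrArg Subtype.val) (conj_eq_one_iff.not.mpr ht))
  have heq : a * s * a⁻¹ = b * t * b⁻¹ := congrArg Subtype.val (hua.trans hub.symm)
  exact (isConj_iff.mpr ⟨a, heq⟩).trans (isConj_iff.mpr ⟨b, rfl⟩).symm

-- As `x`, `y`, `z` are the quotients of `N` by `a`, `b`, `c`, this is the equation
-- `1/a + 1/b + 1/c = 1 + 2/N`.
theorem add_eq_add_two_cases_of_mul_eq {N a b c x y z : ℕ} (ha : 2 ≤ a) (hab : a ≤ b) (hbc : b ≤ c)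
    (hx : a * x = N) (hy : b * y = N) (hz : c * z = N) (hs : x + y + z = N + 2) :
    (a = 2 ∧ b = 2 ∧ z = 2) ∨ (a = 2 ∧ b = 3 ∧ c = 3 ∧ N = 12) ∨
    (a = 2 ∧ b = 3 ∧ c = 4 ∧ N = 24) ∨ (a = 2 ∧ b = 3 ∧ c = 5 ∧ N = 60) := by
  have ha2 : a = 2 := by
    by_contra h
    have h1 : 3 * x ≤ a * x := Nat.mul_le_mul_right _ (by lia)
    have h2 : 3 * y ≤ b * y := Nat.mul_le_mul_right _ (by lia)
    have h3 : 3 * z ≤ c * z := Nat.mul_le_mul_right _ (by lia)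
    lia
  subst ha2
  have hb : b < 4 := by
    by_contra h
    have h2 : 4 * y ≤ b * y := Nat.mul_le_mul_right _ (by lia)
    have h3 : 4 * z ≤ c * z := Nat.mul_le_mul_right _ (by lia)
    lia
  interval_cases b
  · left; lia
  · have hc : c < 6 := by
      by_contra h
      have h3 : 6 * z ≤ c * z := Nat.mul_le_mul_right _ (by lia)
      lia
    interval_cases c <;> lia

namespace IsPoleSystem

variable {ι κ : Type*} [Fintype ι] [Fintype κ] {H : ι → Subgroup G}

theorem comp_equiv (hH : IsPoleSystem H) (e : κ ≃ ι) : IsPoleSystem (H ∘ e) where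
  isCyclic k := hH.isCyclic (e k)
  one_lt_card k := hH.one_lt_card (e k)
  exists_conj_mem g hg := by
    obtain ⟨i, h⟩ := hH.exists_conj_mem g hg
    exact ⟨e.symm i, by simpa using h⟩
  sum_index := by
    rw [Fintype.card_congr e, ← hH.sum_index]
    exact congrArg _ (e.sum_comp fun i ↦ (H i).index)

theorem exists_monotone_fin (hH : IsPoleSystem H) :
    ∃ K : Fin (Fintype.card ι) → Subgroup G,
      IsPoleSystem K ∧ Monotone fun i ↦ Nat.card (K i) := by
  let e := (Fintype.equivFin ι).symm
  let σ := Tuple.sort fun i ↦ Nat.card (H (e i))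
  exact ⟨H ∘ (σ.trans e), hH.comp_equiv _, Tuple.monotone_sort fun i ↦ Nat.card (H (e i))⟩

theorem orderOf_eq_of_prime_dvd (hH : IsPoleSystem H) {p : ℕ} (hp : p.Prime)
    (h : ∀ i, p ∣ Nat.card (H i) → Nat.card (H i) = p) (g : G) (hg : p ∣ orderOf g) :
    orderOf g = p := by
  have hg1 : orderOf g ≠ 1 := fun h1 ↦ hp.not_dvd_one (h1 ▸ hg)
  obtain ⟨i, a, hi⟩ := hH.exists_conj_mem g (mt orderOf_eq_one_iff.mpr hg1)
  have hdvd := orderOf_dvd_card_of_conj_mem hi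
  exact (hp.dvd_iff_eq hg1).mp (h i (hg.trans hdvd) ▸ hdvd) |>.symm

theorem isConj_of_orderOf_eq_two (hH : IsPoleSystem H) {i : ι} (hi : Nat.card (H i) = 2)
    (hodd : ∀ j ≠ i, Odd (Nat.card (H j))) (s t : G) (hs : orderOf s = 2) (ht : orderOf t = 2) :
    IsConj s t := by
  have conj_mem (g : G) (hg : orderOf g = 2) : ∃ a, a * g * a⁻¹ ∈ H i := by
    obtain ⟨j, a, h⟩ := hH.exists_conj_mem g (by rintro rfl; simp at hg)
    by_cases hj : j = i
    · exact ⟨a, hj ▸ h⟩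
    · have hdvd := orderOf_dvd_card_of_conj_mem h
      rw [hg] at hdvd
      exact absurd (even_iff_two_dvd.mpr hdvd) (Nat.not_even_iff_odd.mpr (hodd j hj))
  refine isConj_of_conj_mem_of_card_eq_two hi ?_ ?_ (conj_mem s hs) (conj_mem t ht) <;>
    rintro rfl <;> simp_all

theorem two_mul_index_le (hH : IsPoleSystem H) (i : ι) : 2 * (H i).index ≤ Nat.card G :=
  (H i).card_mul_index ▸ Nat.mul_le_mul_right _ (hH.one_lt_card i)

theorem card_eq_one_of_fin_zero {H : Fin 0 → Subgroup G} (hH : IsPoleSystem H) :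
    Nat.card G = 1 := by
  simpa using hH.sum_index

theorem card_lt_four (hH : IsPoleSystem H) : Fintype.card ι < 4 := by
  by_contra! hι
  have hle : 2 * ∑ i, (H i).index ≤ Fintype.card ι * Nat.card G := by
    rw [Finset.mul_sum]
    exact Finset.sum_le_card_nsmul _ _ _ fun i _ ↦ hH.two_mul_index_le i
  have h4 : 4 * Nat.card G ≤ Fintype.card ι * Nat.card G := Nat.mul_le_mul_right _ hι
  have := hH.sum_index
  lia

variable [Finite G]

theorem not_fin_one {H : Fin 1 → Subgroup G} : ¬ IsPoleSystem H := by
  intro hH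
  have hsum := hH.sum_index
  have := hH.two_mul_index_le 0
  have := (H 0).index_ne_zero_of_finite
  rw [Fintype.card_fin, Fin.sum_univ_one] at hsum
  lia

theorem isCyclic_of_fin_two {H : Fin 2 → Subgroup G} (hH : IsPoleSystem H) : IsCyclic G := by
  have hsum := hH.sum_index
  have := (H 0).index_ne_zero_of_finite
  have := (H 1).index_ne_zero_of_finite
  rw [Fintype.card_fin, Fin.sum_univ_two] at hsum
  have htop : H 0 = ⊤ := Subgroup.index_eq_one.mp (by lia)
  have : IsCyclic (⊤ : Subgroup G) := htop ▸ hH.isCyclic 0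
  exact isCyclic_of_surjective _ Subgroup.topEquiv.surjective

section FinThree

variable {H : Fin 3 → Subgroup G}

theorem nonempty_mulEquiv_dihedralGroup (hH : IsPoleSystem H) (h0 : Nat.card (H 0) = 2)
    (h1 : Nat.card (H 1) = 2) (h2 : (H 2).index = 2) :
    Nonempty (G ≃* DihedralGroup (Nat.card (H 2))) := by
  have := hH.isCyclic 2
  have hnormal : (H 2).Normal := Subgroup.normal_of_index_eq_two h2
  refine nonempty_mulEquiv_dihedralGroup_of_index_two h2 fun g hg ↦ ?_
  rw [← pow_two, ← orderOf_dvd_iff_pow_eq_one]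
  obtain ⟨i, a, h⟩ := hH.exists_conj_mem g fun hg1 ↦ hg (hg1 ▸ one_mem _)
  fin_cases i
  · exact h0 ▸ orderOf_dvd_card_of_conj_mem h
  · exact h1 ▸ orderOf_dvd_card_of_conj_mem h
  · exact absurd (by simpa using hnormal.mem_comm h) hg

theorem isRotationGroup_of_fin_three (hH : IsPoleSystem H)
    (hmono : Monotone fun i ↦ Nat.card (H i)) : IsRotationGroup G := by
  have hsum := hH.sum_index
  rw [Fintype.card_fin, Fin.sum_univ_three] at hsum
  have h01 : Nat.card (H 0) ≤ Nat.card (H 1) := hmono (Fin.zero_le 1)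
  have h12 : Nat.card (H 1) ≤ Nat.card (H 2) := hmono (Fin.le_last 1)
  rcases add_eq_add_two_cases_of_mul_eq (hH.one_lt_card 0) h01 h12
    (H 0).card_mul_index (H 1).card_mul_index (H 2).card_mul_index (by lia) with
    ⟨h0, h1, h2⟩ | ⟨h0, h1, h2, hG⟩ | ⟨h0, h1, h2, hG⟩ | ⟨h0, h1, h2, hG⟩
  · exact .inr (.inl ⟨_, hH.one_lt_card 2, hH.nonempty_mulEquiv_dihedralGroup h0 h1 h2⟩)
  · have hord := hH.orderOf_eq_of_prime_dvd Nat.prime_three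
      (by simp [Fin.forall_fin_succ, h0, h1, h2])
    obtain ⟨f, hf⟩ := exists_injective_hom_perm_fin_four hG (.inl rfl) hord
    exact .inr (.inr (.inl (nonempty_mulEquiv_alternatingGroup_fin (hG ▸ rfl) hf)))
  · have hord := hH.orderOf_eq_of_prime_dvd Nat.prime_three
      (by simp [Fin.forall_fin_succ, h0, h1, h2])
    obtain ⟨f, hf⟩ := exists_injective_hom_perm_fin_four hG (.inr rfl) hord
    exact .inr (.inr (.inr (.inl (nonempty_mulEquiv_perm_fin hG hf))))
  · have hord := hH.orderOf_eq_of_prime_dvd Nat.prime_two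
      (by simp [Fin.forall_fin_succ, h0, h1, h2])
    have hconj := hH.isConj_of_orderOf_eq_two h0
      (by simp [Fin.forall_fin_succ, h1, h2, Nat.odd_iff])
    obtain ⟨f, hf⟩ := exists_injective_hom_perm_fin_five hG hord hconj
    exact .inr (.inr (.inr (.inr (nonempty_mulEquiv_alternatingGroup_fin (hG ▸ rfl) hf))))

end FinThree

theorem isRotationGroup (hH : IsPoleSystem H) : IsRotationGroup G := by
  obtain ⟨K, hK, hmono⟩ := hH.exists_monotone_fin
  have hr := hH.card_lt_four
  generalize Fintype.card ι = r at *
  interval_cases r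
  · have := (Nat.card_eq_one_iff_unique.mp hK.card_eq_one_of_fin_zero).1
    exact .of_isCyclic
  · exact absurd hK not_fin_one
  · have := hK.isCyclic_of_fin_two
    exact .of_isCyclic
  · exact hK.isRotationGroup_of_fin_three hmono

end IsPoleSystem

theorem isRotationGroup_of_action {X : Type*} [Finite G] [MulAction G X]
    (hfix : ∀ g : G, g ≠ 1 → (MulAction.fixedBy X g).ncard = 2)
    (hcyc : ∀ x : X, IsCyclic (MulAction.stabilizer G x)) : IsRotationGroup G := by
  have := finite_poles hfix
  have := Fintype.ofFinite (MulAction.orbitRel.Quotient G (poles G X))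
  exact (isPoleSystem_stabilizer_out hfix hcyc).isRotationGroup

end Classification

section LinearAction

open MulAction Projectivization
open scoped LinearAlgebra.Projectivization

variable {G K V : Type*} [Group G] [Field K] [AddCommGroup V] [Module K V] [DistribMulAction G V]
  [SMulCommClass G K V]

theorem exists_smul_rep_eq_of_mem_stabilizer {x : ℙ K V} {g : G} (hg : g ∈ stabilizer G x) :
    ∃ c : Kˣ, g • x.rep = (c : K) • x.rep := by
  rw [mem_stabilizer_iff, ← x.mk_rep, smul_mk, mk_eq_mk_iff] at hg
  obtain ⟨c, hc⟩ := hg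
  exact ⟨c, hc.symm⟩

theorem exists_hom_smul_rep_eq (x : ℙ K V) :
    ∃ χ : stabilizer G x →* Kˣ, ∀ g : stabilizer G x, (g : G) • x.rep = (χ g : K) • x.rep := by
  choose χ hχ using fun g : stabilizer G x ↦ exists_smul_rep_eq_of_mem_stabilizer g.2
  refine ⟨MonoidHom.mk' χ fun g h ↦ Units.ext (smul_left_injective K x.rep_nonzero ?_), hχ⟩
  calc
    (χ (g * h) : K) • x.rep = (g : G) • (h : G) • x.rep := by
      rw [← hχ, Subgroup.coe_mul, mul_smul]
    _ = ((χ g * χ h : Kˣ) : K) • x.rep := by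
      rw [hχ h, smul_comm, hχ g, smul_smul, mul_comm, Units.val_mul]

/-- The eigenvalue on the line `x` of the elements that stabilize this line, as a character of the
stabilizer. -/
noncomputable def eigenvalueHom (x : ℙ K V) : stabilizer G x →* Kˣ :=
  (exists_hom_smul_rep_eq x).choose

theorem smul_rep_eq_eigenvalueHom_smul {x : ℙ K V} (g : stabilizer G x) :
    (g : G) • x.rep = (eigenvalueHom x g : K) • x.rep :=
  (exists_hom_smul_rep_eq x).choose_spec g

theorem eigenvalueHom_mk_eq {v : V} (hv : v ≠ 0) (g : stabilizer G (mk K v hv)) {c : K}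
    (hc : (g : G) • v = c • v) : (eigenvalueHom (mk K v hv) g : K) = c := by
  obtain ⟨a, ha⟩ := exists_smul_eq_mk_rep K v hv
  refine smul_left_injective K (mk K v hv).rep_nonzero ?_
  simp only [← smul_rep_eq_eigenvalueHom_smul]
  rw [← ha, smul_comm, hc, smul_comm]

end LinearAction

section Eigenvalues

open Matrix Polynomial
open scoped MatrixGroups

variable {K : Type*} [Field K]

-- The minimal polynomial of `a` is squarefree and divides a power of `X - C c`.
theorem eq_algebraMap_of_isNilpotent_sub {A : Type*} [Ring A] [Algebra K A] {a : A} {c : K}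
    {p : K[X]} (hp : Squarefree p) (hpa : aeval a p = 0) (ha : IsNilpotent (a - algebraMap K A c)) :
    a = algebraMap K A c := by
  obtain ⟨n, hn⟩ := ha
  have hdvd : minpoly K a ∣ (X - C c) ^ (n + 1) :=
    minpoly.dvd K a (by simp [pow_succ, hn])
  have hsq : Squarefree (minpoly K a) := hp.squarefree_of_dvd (minpoly.dvd K a hpa)
  obtain ⟨q, hq⟩ := (hsq.dvd_pow_iff_dvd n.succ_ne_zero).mp hdvd
  have haeval : aeval a (X - C c) = 0 := by rw [hq, map_mul, minpoly.aeval, zero_mul]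
  rwa [map_sub, aeval_X, aeval_C, sub_eq_zero] at haeval

variable {ι : Type*} [Fintype ι] [DecidableEq ι]

theorem isRoot_charpoly_iff_exists_mulVec_eq_smul {R : Type*} [CommRing R] [IsDomain R]
    {A : Matrix ι ι R} {c : R} : A.charpoly.IsRoot c ↔ ∃ v ≠ 0, A *ᵥ v = c • v := by
  rw [IsRoot, eval_charpoly, ← exists_mulVec_eq_zero_iff]
  simp only [sub_mulVec, sub_eq_zero, scalar_apply, diagonal_const_mulVec, eq_comm]

theorem algebraMap_mulVec {R : Type*} [CommRing R] (c : R) (v : ι → R) :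
    algebraMap R (Matrix ι ι R) c *ᵥ v = c • v := by
  rw [Algebra.algebraMap_eq_smul_one, smul_mulVec, one_mulVec]

theorem projMk_eq_one_of_coe_eq_algebraMap {R : Type*} [CommRing R] {A : GL ι R} {c : R}
    (h : (A : Matrix ι ι R) = algebraMap R _ c) : ProjGenLinGroup.mk A = 1 := by
  rw [ProjGenLinGroup.mk_eq_one, Subgroup.mem_center_iff]
  intro B
  ext1
  simp only [GeneralLinearGroup.coe_mul, h, Algebra.commutes]

theorem exists_coe_eq_algebraMap_of_projMk_eq_one {R : Type*} [CommRing R] {A : GL ι R}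
    (hA : ProjGenLinGroup.mk A = 1) :
    ∃ u : Rˣ, (A : Matrix ι ι R) = algebraMap R _ (u : R) := by
  rw [ProjGenLinGroup.mk_eq_one, GeneralLinearGroup.center_eq_range_scalar] at hA
  obtain ⟨u, rfl⟩ := hA
  exact ⟨u, rfl⟩

theorem projMk_eq_one_of_charpoly_eq_pow {A : GL ι K} {n k : ℕ} {c : K} (hn : (n : K) ≠ 0)
    (hA : ProjGenLinGroup.mk A ^ n = 1) (hchar : A.1.charpoly = (X - C c) ^ k) :
    ProjGenLinGroup.mk A = 1 := by
  obtain ⟨u, hu⟩ := exists_coe_eq_algebraMap_of_projMk_eq_one ((map_pow _ A n).trans hA)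
  refine projMk_eq_one_of_coe_eq_algebraMap (c := c) <|
    eq_algebraMap_of_isNilpotent_sub (separable_X_pow_sub_C (u : K) hn u.ne_zero).squarefree ?_ ?_
  · rw [map_sub, map_pow, aeval_X, aeval_C, ← Units.val_pow_eq_pow_val, hu, sub_self]
  · exact ⟨k, by simpa [hchar] using A.1.aeval_self_charpoly⟩

theorem det_eq_mul_of_isRoot_charpoly {R : Type*} [CommRing R] [Nontrivial R]
    {A : Matrix (Fin 2) (Fin 2) R} {c : R} (hc : A.charpoly.IsRoot c) :
    A.det = c * (A.trace - c) := by
  rw [charpoly_fin_two] at hc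
  simp only [IsRoot, eval_add, eval_sub, eval_mul, eval_pow, eval_X, eval_C] at hc
  linear_combination hc

theorem charpoly_eq_mul_of_isRoot {R : Type*} [CommRing R] [Nontrivial R]
    {A : Matrix (Fin 2) (Fin 2) R} {c : R} (hc : A.charpoly.IsRoot c) :
    A.charpoly = (X - C c) * (X - C (A.trace - c)) := by
  rw [charpoly_fin_two, det_eq_mul_of_isRoot_charpoly hc]
  simp only [C_mul, C_sub]
  ring

end Eigenvalues

section ProjectiveLine

open Polynomial Matrix MulAction Projectivization
open scoped LinearAlgebra.Projectivization MatrixGroups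

variable {K : Type*} [Field K]

theorem projMk_eq_one_of_eigenvalueHom_eq {A : GL (Fin 2) K} {x y : ℙ K (Fin 2 → K)} (hxy : x ≠ y)
    (hx : A ∈ stabilizer (GL (Fin 2) K) x) (hy : A ∈ stabilizer (GL (Fin 2) K) y)
    (h : eigenvalueHom x ⟨A, hx⟩ = eigenvalueHom y ⟨A, hy⟩) : ProjGenLinGroup.mk A = 1 := by
  have hspan := (linearIndependent_pair_iff_ne.mpr hxy).span_eq_top_of_card_eq_finrank'
    (by simp)
  refine projMk_eq_one_of_coe_eq_algebraMap (c := eigenvalueHom x ⟨A, hx⟩) (toLin'.injective ?_)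
  refine LinearMap.ext_on_range hspan fun i ↦ ?_
  rw [toLin'_apply, toLin'_apply, algebraMap_mulVec]
  fin_cases i
  · exact smul_rep_eq_eigenvalueHom_smul ⟨A, hx⟩
  · rw [h]
    exact smul_rep_eq_eigenvalueHom_smul ⟨A, hy⟩

theorem ncard_fixedBy_projMk {A : GL (Fin 2) K} (hA : ProjGenLinGroup.mk A ≠ 1) :
    (fixedBy (ℙ K (Fin 2 → K)) (ProjGenLinGroup.mk A)).ncard =
      (A.1.charpoly.rootSet K).ncard := by
  refine Set.ncard_congr (fun x hx ↦ (eigenvalueHom x ⟨A, hx⟩ : K)) (fun x hx ↦ ?_)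
    (fun x y hx hy h ↦ ?_) fun c hc ↦ ?_
  · rw [mem_rootSet_of_ne A.1.charpoly_monic.ne_zero, coe_aeval_eq_eval]
    exact isRoot_charpoly_iff_exists_mulVec_eq_smul.mpr
      ⟨x.rep, x.rep_nonzero, smul_rep_eq_eigenvalueHom_smul ⟨A, hx⟩⟩
  · by_contra hxy
    exact hA (projMk_eq_one_of_eigenvalueHom_eq hxy hx hy (Units.ext h))
  · rw [mem_rootSet_of_ne A.1.charpoly_monic.ne_zero, coe_aeval_eq_eval] at hc
    obtain ⟨v, hv, hAv⟩ := isRoot_charpoly_iff_exists_mulVec_eq_smul.mp hc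
    have hfix : A • mk K v hv = mk K v hv := by
      rw [smul_mk, mk_eq_mk_iff']
      exact ⟨c, hAv.symm⟩
    exact ⟨mk K v hv, hfix, eigenvalueHom_mk_eq hv ⟨A, hfix⟩ hAv⟩

theorem ncard_fixedBy_eq_two [IsAlgClosed K] {g : PGL(2, K)} {n : ℕ} (hn : (n : K) ≠ 0)
    (hgn : g ^ n = 1) (hg : g ≠ 1) : (fixedBy (ℙ K (Fin 2 → K)) g).ncard = 2 := by
  obtain ⟨A, rfl⟩ := ProjGenLinGroup.mk_surjective g
  obtain ⟨c, hc⟩ := IsAlgClosed.exists_root A.1.charpoly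
    (by rw [charpoly_degree_eq_dim]; simp)
  have hchar := charpoly_eq_mul_of_isRoot hc
  have hne : c ≠ A.1.trace - c := fun h ↦ hg <|
    projMk_eq_one_of_charpoly_eq_pow hn hgn (k := 2) (by rw [hchar, ← h, sq])
  have hroots : A.1.charpoly.rootSet K = {c, A.1.trace - c} := by
    ext a
    rw [mem_rootSet_of_ne A.1.charpoly_monic.ne_zero, hchar]
    simp [sub_eq_zero]
  rw [ncard_fixedBy_projMk hg, hroots, Set.ncard_pair hne]

/-- The restriction of the projection `GL (Fin 2) K → PGL(2, K)` to the stabilizers of `x`. -/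
def stabilizerMk (x : ℙ K (Fin 2 → K)) :
    stabilizer (GL (Fin 2) K) x →* stabilizer PGL(2, K) x :=
  (ProjGenLinGroup.mk.comp (stabilizer (GL (Fin 2) K) x).subtype).codRestrict _ fun A ↦ A.2

theorem stabilizerMk_surjective (x : ℙ K (Fin 2 → K)) : Function.Surjective (stabilizerMk x) := by
  rintro ⟨g, hg⟩
  obtain ⟨A, rfl⟩ := ProjGenLinGroup.mk_surjective g
  exact ⟨⟨A, hg⟩, rfl⟩

/-- The ratio of the eigenvalue of `A` on the line `x` to the other eigenvalue of `A`. As the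
product of the two eigenvalues is `det A`, the ratio is the square of the former divided by
`det A`. -/
noncomputable def eigenvalueRatioHom (x : ℙ K (Fin 2 → K)) :
    stabilizer (GL (Fin 2) K) x →* Kˣ :=
  eigenvalueHom x ^ 2 / GeneralLinearGroup.det.comp (stabilizer (GL (Fin 2) K) x).subtype

theorem eigenvalueRatioHom_eq_one_iff {x : ℙ K (Fin 2 → K)} {A : stabilizer (GL (Fin 2) K) x} :
    eigenvalueRatioHom x A = 1 ↔ (eigenvalueHom x A : K) ^ 2 = A.1.1.det := by
  rw [eigenvalueRatioHom, MonoidHom.div_apply, div_eq_one, Units.ext_iff]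
  rfl

theorem ker_stabilizerMk_le (x : ℙ K (Fin 2 → K)) :
    (stabilizerMk x).ker ≤ (eigenvalueRatioHom x).ker := by
  intro A hA
  obtain ⟨u, hu⟩ := exists_coe_eq_algebraMap_of_projMk_eq_one (congrArg Subtype.val hA)
  have heig : (eigenvalueHom x A : K) = u :=
    smul_left_injective K x.rep_nonzero <|
      calc
        (eigenvalueHom x A : K) • x.rep = A.1.1 *ᵥ x.rep := (smul_rep_eq_eigenvalueHom_smul A).symm
        _ = (u : K) • x.rep := (congrArg (· *ᵥ x.rep) hu).trans (algebraMap_mulVec _ _)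
  have hdet : A.1.1.det = (u : K) ^ 2 := by
    rw [show A.1.1 = algebraMap K _ (u : K) from hu, Algebra.algebraMap_eq_smul_one]
    simp
  rw [MonoidHom.mem_ker, eigenvalueRatioHom_eq_one_iff, heig, hdet]

/-- The multiplier of a projective transformation at its fixed point `x`, induced by
`eigenvalueRatioHom`. It is the inverse of the derivative at `x` of the Möbius transformation. -/
noncomputable def multiplierHom (x : ℙ K (Fin 2 → K)) : stabilizer PGL(2, K) x →* Kˣ :=
  (stabilizerMk x).liftOfSurjective (stabilizerMk_surjective x)
    ⟨eigenvalueRatioHom x, ker_stabilizerMk_le x⟩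

theorem multiplierHom_stabilizerMk {x : ℙ K (Fin 2 → K)} (A : stabilizer (GL (Fin 2) K) x) :
    multiplierHom x (stabilizerMk x A) = eigenvalueRatioHom x A :=
  (stabilizerMk x).liftOfRightInverse_comp_apply _ _ _ A

theorem eq_one_of_multiplierHom_eq_one {x : ℙ K (Fin 2 → K)} {g : stabilizer PGL(2, K) x} {n : ℕ}
    (hn : (n : K) ≠ 0) (hgn : g ^ n = 1) (hg : multiplierHom x g = 1) : g = 1 := by
  obtain ⟨A, rfl⟩ := stabilizerMk_surjective x g
  have hroot : A.1.1.charpoly.IsRoot (eigenvalueHom x A) :=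
    isRoot_charpoly_iff_exists_mulVec_eq_smul.mpr
      ⟨x.rep, x.rep_nonzero, smul_rep_eq_eigenvalueHom_smul A⟩
  have hsq : (eigenvalueHom x A : K) ^ 2 = A.1.1.det := by
    rwa [multiplierHom_stabilizerMk, eigenvalueRatioHom_eq_one_iff] at hg
  have htrace : A.1.1.trace - eigenvalueHom x A = eigenvalueHom x A :=
    mul_left_cancel₀ (Units.ne_zero _) (by rw [← det_eq_mul_of_isRoot_charpoly hroot, ← hsq, sq])
  have hchar : A.1.1.charpoly = (X - C (eigenvalueHom x A : K)) ^ 2 := by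
    rw [charpoly_eq_mul_of_isRoot hroot, htrace, sq]
  exact Subtype.ext (projMk_eq_one_of_charpoly_eq_pow hn (congrArg Subtype.val hgn) hchar)

theorem isCyclic_stabilizer {G : Subgroup PGL(2, K)} [Finite G] (hG : (Nat.card G : K) ≠ 0)
    (x : ℙ K (Fin 2 → K)) : IsCyclic (stabilizer G x) := by
  let ι : stabilizer G x →* stabilizer PGL(2, K) x :=
    (G.subtype.comp (stabilizer G x).subtype).codRestrict _ fun g ↦ g.2
  let χ : stabilizer G x →* K := (Units.coeHom K).comp ((multiplierHom x).comp ι)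
  refine isCyclic_of_injective_ringHom χ <| (injective_iff_map_eq_one _).mpr fun g hg ↦ ?_
  have hpow : ι g ^ Nat.card G = 1 := by
    rw [← map_pow, show g ^ Nat.card G = 1 from Subtype.ext pow_card_eq_one', map_one]
  have hone : ι g = 1 := eq_one_of_multiplierHom_eq_one hG hpow (Units.ext hg)
  exact Subtype.ext (Subtype.ext congr(($hone).1))

end ProjectiveLine

section PGLTwo

open Matrix
open scoped MatrixGroups

theorem isRotationGroup_of_isAlgClosed {K : Type*} [Field K] [IsAlgClosed K]
    (G : Subgroup PGL(2, K)) [Finite G] (hG : (Nat.card G : K) ≠ 0) : IsRotationGroup G := by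
  refine isRotationGroup_of_action (X := Projectivization K (Fin 2 → K)) (fun g hg ↦ ?_)
    (isCyclic_stabilizer hG)
  exact ncard_fixedBy_eq_two hG (congrArg Subtype.val (pow_card_eq_one' (x := g)))
    fun h ↦ hg (Subtype.ext h)

theorem injective_projGenLinGroup_map {ι R S : Type*} [Fintype ι] [DecidableEq ι] [CommRing R]
    [CommRing S] {f : R →+* S} (hf : Function.Injective f) :
    Function.Injective (ProjGenLinGroup.map (n := ι) f) := by
  refine (injective_iff_map_eq_one _).mpr fun g hg ↦ ?_
  obtain ⟨A, rfl⟩ := ProjGenLinGroup.mk_surjective g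
  rw [ProjGenLinGroup.map_mk, ProjGenLinGroup.mk_eq_one, Subgroup.mem_center_iff] at hg
  rw [ProjGenLinGroup.mk_eq_one, Subgroup.mem_center_iff]
  have hinj : Function.Injective (GeneralLinearGroup.map (n := ι) f) :=
    Units.map_injective (Matrix.map_injective hf)
  exact fun B ↦ hinj (by simpa only [map_mul] using hg (GeneralLinearGroup.map f B))

-- As `Nat.card` of an infinite type is `0`, the hypothesis `hG` says that `G` is finite and that
-- the characteristic of `K` does not divide its order.
theorem finite_subgroup_pgl2_classification_general {K : Type*} [Field K] (G : Subgroup PGL(2, K))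
    (hG : (Nat.card G : K) ≠ 0) : IsRotationGroup G := by
  have : Finite G := Nat.finite_of_card_ne_zero fun h ↦ hG (by rw [h, Nat.cast_zero])
  let f := algebraMap K (AlgebraicClosure K)
  let e := G.equivMapOfInjective _ (injective_projGenLinGroup_map (ι := Fin 2) f.injective)
  have : Finite (G.map (ProjGenLinGroup.map f)) := Finite.of_equiv G e
  refine (isRotationGroup_of_isAlgClosed (G.map (ProjGenLinGroup.map f)) ?_).of_mulEquiv e
  rwa [← Nat.card_congr e.toEquiv, ← map_natCast f, map_ne_zero]

end PGLTwo

/-- Classification of finite subgroups of `PGL(2, ℂ) = GL(2, ℂ)/Z` (the automorphism group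
of the Riemann sphere): every finite subgroup is isomorphic to a cyclic group `ℤ/nℤ`
(`n ≥ 1`), a dihedral group of order `2n` (`n ≥ 2`), `A₄`, `S₄`, or `A₅`. -/
theorem finite_subgroup_pgl2_classification
    (G : Subgroup ((GL (Fin 2) ℂ) ⧸ Subgroup.center (GL (Fin 2) ℂ))) (hG : Finite G) :
    (∃ n : ℕ, 1 ≤ n ∧ Nonempty (G ≃* Multiplicative (ZMod n))) ∨
    (∃ n : ℕ, 2 ≤ n ∧ Nonempty (G ≃* DihedralGroup n)) ∨
    Nonempty (G ≃* alternatingGroup (Fin 4)) ∨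
    Nonempty (G ≃* Equiv.Perm (Fin 4)) ∨
    Nonempty (G ≃* alternatingGroup (Fin 5)) :=
  finite_subgroup_pgl2_classification_general G
    (Nat.cast_ne_zero.mpr (Nat.card_pos (α := G)).ne')
end
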